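/- Let I ⊆ R be a monomial ideal, let f be a monomial of degree k, and let x_{i_1},…,x_{i_k} be distinct variables of R. Then: (i) depth(R/(I + (f))) ≥ depth(R/I) − 1; (ii) depth(R/I) ≤ depth(R/(I : f)); (iii) depth(R/(I + (x_{i_1},…,x_{i_k}))) ≥ depth(R/I) − k; (iv) reg(R/I) ≥ reg(R/(I : f)); (v) reg(R/(I + (f))) ≤ reg(R/I) + k − 1; (vi) depth(R/I) = depth(R/(I : f)) or depth(R/I) = depth(R/(I + (f))); (vii) if k = 1, then reg(R/I) = reg(R/(I : f)) + 1 or reg(R/I) = reg(R/(I + (f))). -/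

import Mathlib

open MvPolynomial CategoryTheory Opposite

noncomputable section

/-- The polynomial ring `K[x_v : v ∈ σ]` over the field `K`. -/
abbrev MvPoly (K : Type) [Field K] (σ : Type) : Type := MvPolynomial σ K

variable (K : Type) [Field K] (σ : Type)

/-- The graded maximal ideal `m = (x_v : v ∈ σ)` generated by all the variables. -/
def maxIdeal : Ideal (MvPoly K σ) := Ideal.span (Set.range MvPolynomial.X)

/-- The depth of `R/I` with respect to the graded maximal ideal, defined as
`inf { i | Ext^i(R/m, R/I) ≠ 0 }` (with value `⊤` for the zero module). -/
def depthQ (I : Ideal (MvPoly K σ)) : ℕ∞ :=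
  sInf { d : ℕ∞ | ∃ i : ℕ, d = i ∧
    Nontrivial (((Ext (MvPoly K σ) (ModuleCat (MvPoly K σ)) i).obj
      (op (ModuleCat.of (MvPoly K σ) (MvPoly K σ ⧸ maxIdeal K σ)))).obj
      (ModuleCat.of (MvPoly K σ) (MvPoly K σ ⧸ I))) }

/-- The degree-`e` homogeneous component condition, for an integer `e`
(for `e < 0` the component is zero). -/
def HomogComp (e : ℤ) (p : MvPoly K σ) : Prop :=
  if 0 ≤ e then p ∈ homogeneousSubmodule σ K e.toNat else p = 0

/-- `v` is a homogeneous element of degree `e` of the graded free module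
`⊕_j R(-dg j)`. -/
def IsHomogVec {m : ℕ} (dg : Fin m → ℤ) (e : ℤ) (v : Fin m → MvPoly K σ) : Prop :=
  ∀ j, HomogComp K σ (e - dg j) (v j)

/-- The degree-`e` homogeneous component of `R/I`. -/
def QuotComp (I : Ideal (MvPoly K σ)) (e : ℤ) : Submodule K (MvPoly K σ ⧸ I) :=
  if 0 ≤ e then
    Submodule.map (Ideal.Quotient.mkₐ K I).toLinearMap (homogeneousSubmodule σ K e.toNat)
  else ⊥

/-- A graded free resolution of `R/I` by finitely generated graded free modules
`F i = ⊕_{j < rk i} R(-dg i j)`, with degree preserving (degree zero) maps. -/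
structure GradedFreeRes (I : Ideal (MvPoly K σ)) where
  rk : ℕ → ℕ
  dg : (i : ℕ) → Fin (rk i) → ℤ
  dmap : (i : ℕ) → ((Fin (rk (i + 1)) → MvPoly K σ) →ₗ[MvPoly K σ] (Fin (rk i) → MvPoly K σ))
  aug : (Fin (rk 0) → MvPoly K σ) →ₗ[MvPoly K σ] (MvPoly K σ ⧸ I)
  aug_surj : Function.Surjective aug
  exact0 : Function.Exact (dmap 0) aug
  exactS : ∀ i, Function.Exact (dmap (i + 1)) (dmap i)
  graded : ∀ i (e : ℤ) v, IsHomogVec K σ (dg (i + 1)) e v → IsHomogVec K σ (dg i) e (dmap i v)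
  aug_graded : ∀ (e : ℤ) v, IsHomogVec K σ (dg 0) e v → aug v ∈ QuotComp K σ I e

/-- `R/I` admits a graded free resolution all of whose twists `dg i j` satisfy
`dg i j - i ≤ r`. -/
def ResBound (I : Ideal (MvPoly K σ)) (r : ℤ) : Prop :=
  ∃ F : GradedFreeRes K σ I, ∀ i j, F.dg i j - i ≤ r

open Classical in
/-- The Castelnuovo–Mumford regularity of `R/I`: the least `r` bounding the twists of
a graded free resolution of `R/I` (with the convention `⊥ = -∞` for the zero module). -/
def CMreg (I : Ideal (MvPoly K σ)) : WithBot ℤ :=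
  if h : ∃ r : ℤ, ResBound K σ I r ∧ ∀ s : ℤ, ResBound K σ I s → r ≤ s
  then ((h.choose : ℤ) : WithBot ℤ) else ⊥

variable {n : ℕ}

/-- The monomial `x^a`. -/
def mono (K : Type) [Field K] {n : ℕ} (a : Fin n →₀ ℕ) : MvPoly K (Fin n) :=
  MvPolynomial.monomial a 1

/-- A monomial ideal: an ideal generated by monomials. -/
def IsMonomialIdeal (I : Ideal (MvPoly K (Fin n))) : Prop :=
  ∃ S : Set (Fin n →₀ ℕ), I = Ideal.span (mono K '' S)

/-- A squarefree exponent vector. -/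
def SqfreeExp (a : Fin n →₀ ℕ) : Prop := ∀ i, a i ≤ 1

/-- A squarefree monomial ideal: an ideal generated by squarefree monomials. -/
def IsSqfreeMonomialIdeal (I : Ideal (MvPoly K (Fin n))) : Prop :=
  ∃ S : Set (Fin n →₀ ℕ), (∀ a ∈ S, SqfreeExp a) ∧ I = Ideal.span (mono K '' S)

end

/-!
All the inequalities come from the exact sequence `0 → R/(I : f) → R/I → R/(I + (f)) → 0`, through
the long exact sequences of `Ext(R/m, -)` for the depth and of the graded `Tor(K, -)`, computed by
the Koszul complex, for the regularity. Comparing `R/I` with `R/(I : f)` needs one more idea. One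
may take `f = x_j`; let `J` be the ideal generated by the monomials of `I` not involving `x_j`.
Then `x_j` is regular on `R/J` and `J + (x_j) = I + (x_j)`. The kernel of `R/J → R/I` lies in
`x_j · R/J`, so its inclusion factors through multiplication by `x_j`, which is zero on
`Ext(R/m, -)` and on `Tor(K, -)`: the invariants of `R/J`, hence those of `R/(I + (x_j))`, are
controlled by `R/I`, and the exact sequence then gives the bound on `R/(I : x_j)`.
-/

section ExtVanishing

universe w v u

variable {C : Type u} [Category.{v} C] [Abelian C] [HasExt.{w} C] {X : C} {S : ShortComplex C}

theorem subsingleton_ext_X₁ (hS : S.ShortExact) {i : ℕ}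
    (h₂ : Subsingleton (Abelian.Ext X S.X₂ i))
    (h₃ : ∀ j, j + 1 = i → Subsingleton (Abelian.Ext X S.X₃ j)) :
    Subsingleton (Abelian.Ext X S.X₁ i) := by
  refine subsingleton_of_forall_eq 0 fun e => ?_
  have he : e.comp (.mk₀ S.f) (add_zero i) = 0 := Subsingleton.elim _ _
  cases i with
  | zero =>
    have := hS.mono_f
    exact Abelian.Ext.postcomp_mk₀_injective_of_mono X S.f (he.trans (map_zero _).symm)
  | succ j =>
    obtain ⟨e', rfl⟩ := Abelian.Ext.covariant_sequence_exact₁ X hS e he rfl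
    rw [(h₃ j rfl).elim e' 0, Abelian.Ext.zero_comp]

theorem subsingleton_ext_X₂ (hS : S.ShortExact) {i : ℕ}
    (h₁ : Subsingleton (Abelian.Ext X S.X₁ i)) (h₃ : Subsingleton (Abelian.Ext X S.X₃ i)) :
    Subsingleton (Abelian.Ext X S.X₂ i) := by
  refine subsingleton_of_forall_eq 0 fun e => ?_
  obtain ⟨e', rfl⟩ := Abelian.Ext.covariant_sequence_exact₂ X hS e (Subsingleton.elim _ _)
  rw [h₁.elim e' 0, Abelian.Ext.zero_comp]

theorem subsingleton_ext_X₃ (hS : S.ShortExact) {i : ℕ}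
    (h₂ : Subsingleton (Abelian.Ext X S.X₂ i)) (h₁ : Subsingleton (Abelian.Ext X S.X₁ (i + 1))) :
    Subsingleton (Abelian.Ext X S.X₃ i) := by
  refine subsingleton_of_forall_eq 0 fun e => ?_
  obtain ⟨e', rfl⟩ := Abelian.Ext.covariant_sequence_exact₃ X hS e rfl (Subsingleton.elim _ _)
  rw [h₂.elim e' 0, Abelian.Ext.zero_comp]

theorem subsingleton_ext_X₂_of_eq_smul {R : Type*} [CommRing R] [Linear R C] {r : R}
    (hr : r • 𝟙 X = 0) (hS : S.ShortExact) {g : S.X₁ ⟶ S.X₂} (hg : S.f = r • g) {i : ℕ}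
    (h₃ : Subsingleton (Abelian.Ext X S.X₃ i)) : Subsingleton (Abelian.Ext X S.X₂ i) := by
  refine subsingleton_of_forall_eq 0 fun e => ?_
  obtain ⟨e', rfl⟩ := Abelian.Ext.covariant_sequence_exact₂ X hS e (h₃.elim _ _)
  have hr' : r • e' = 0 := by
    rw [← Abelian.Ext.mk₀_id_comp e', ← Abelian.Ext.smul_comp, ← Abelian.Ext.mk₀_smul, hr,
      Abelian.Ext.mk₀_zero, Abelian.Ext.zero_comp]
  rw [hg, Abelian.Ext.mk₀_smul, Abelian.Ext.comp_smul, ← Abelian.Ext.smul_comp, hr',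
    Abelian.Ext.zero_comp]

theorem extMk_eq_zero_iff_exists (P : ProjectiveResolution X) {Y : C} {i : ℕ}
    (φ : P.complex.X i ⟶ Y) (hφ : P.complex.d (i + 1) i ≫ φ = 0) :
    P.extMk φ (i + 1) rfl hφ = 0 ↔
      ∃ ψ : P.complex.X (i - 1) ⟶ Y, P.complex.d i (i - 1) ≫ ψ = φ := by
  cases i with
  | zero =>
    have hd : P.cochainComplex.d (-(0 : ℕ)) 1 = 0 :=
      (CochainComplex.isZero_of_isStrictlyLE P.cochainComplex 0 1).eq_of_tgt _ _
    have hd' : P.complex.d 0 (0 - 1) = 0 := P.complex.shape _ _ (by simp)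
    rw [← P.extEquivCohomologyClass.apply_eq_iff_eq, P.extEquivCohomologyClass_extMk,
      P.extEquivCohomologyClass_zero, CochainComplex.HomComplex.CohomologyClass.mk_eq_zero_iff,
      CochainComplex.HomComplex.Cocycle.toSingleMk_mem_coboundaries_iff _ _ _ _ _ 1 (by lia)]
    simp only [hd, hd', Limits.zero_comp]
    simp [eq_comm (a := (0 : _ ⟶ Y)), Preadditive.IsIso.comp_left_eq_zero]
  | succ j => exact P.extMk_eq_zero_iff φ _ rfl hφ j rfl

theorem subsingleton_ext_obj_iff {R : Type*} [Ring R] [Linear R C] [EnoughProjectives C] (Y : C)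
    (i : ℕ) : Subsingleton (((Ext R C i).obj (op X)).obj Y) ↔ Subsingleton (Abelian.Ext X Y i) := by
  let P := projectiveResolution X
  have hprev : (ComplexShape.up ℕ).prev i = i - 1 := by cases i <;> simp
  rw [← ModuleCat.isZero_iff_subsingleton, (P.isoExt i Y).isZero_iff,
    ← HomologicalComplex.exactAt_iff_isZero_homology,
    HomologicalComplex.exactAt_iff' _ (i - 1) i (i + 1) hprev (by simp),
    ShortComplex.moduleCat_exact_iff]
  constructor
  · refine fun h => subsingleton_of_forall_eq 0 fun e => ?_
    obtain ⟨φ, hφ, rfl⟩ := P.extMk_surjective e (i + 1) rfl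
    exact (extMk_eq_zero_iff_exists P φ hφ).2 (h φ hφ)
  · exact fun h φ hφ => (extMk_eq_zero_iff_exists P φ hφ).1 (h.elim _ _)

end ExtVanishing

section ColonSequence

variable {R : Type*} [CommRing R]

theorem colon_span_singleton_mul (I : Ideal R) (f g : R) :
    I.colon (Ideal.span {f * g}) = (I.colon (Ideal.span {f})).colon (Ideal.span {g}) := by
  ext p
  simp only [Ideal.mem_colon_span_singleton, mul_right_comm, mul_assoc]

theorem colon_span_singleton_one (I : Ideal R) : I.colon (Ideal.span {(1 : R)}) = I := by
  ext p
  rw [Ideal.mem_colon_span_singleton, mul_one]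

/-- Multiplication by `f` as a map `R/(I : f) → R/I`, the first map of the sequence
`0 → R/(I : f) → R/I → R/(I + (f)) → 0`. -/
def colonMul (I : Ideal R) (f : R) : (R ⧸ I.colon (Ideal.span {f})) →ₗ[R] (R ⧸ I) :=
  Submodule.mapQ _ _ (LinearMap.mulRight R f) fun _ hp => Ideal.mem_colon_span_singleton.1 hp

theorem colonMul_mk (I : Ideal R) (f p : R) :
    colonMul I f (Ideal.Quotient.mk _ p) = Ideal.Quotient.mk I (p * f) := rfl

theorem colonMul_injective (I : Ideal R) (f : R) : Function.Injective (colonMul I f) := by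
  refine (injective_iff_map_eq_zero _).2 fun v hv => ?_
  obtain ⟨p, rfl⟩ := Ideal.Quotient.mk_surjective v
  rw [colonMul_mk, Ideal.Quotient.eq_zero_iff_mem] at hv
  exact Ideal.Quotient.eq_zero_iff_mem.2 (Ideal.mem_colon_span_singleton.2 hv)

theorem factor_mk {I J : Ideal R} (h : I ≤ J) (p : R) :
    Submodule.factor h (Ideal.Quotient.mk I p) = Ideal.Quotient.mk J p := rfl

theorem exact_colonMul_factor (I : Ideal R) (f : R) :
    Function.Exact (colonMul I f)
      (Submodule.factor (le_sup_left : I ≤ I ⊔ Ideal.span {f})) := by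
  intro v
  obtain ⟨p, rfl⟩ := Ideal.Quotient.mk_surjective v
  rw [factor_mk, Ideal.Quotient.eq_zero_iff_mem, sup_comm, Ideal.mem_span_singleton_sup]
  constructor
  · rintro ⟨g, q, hq, rfl⟩
    exact ⟨Ideal.Quotient.mk _ g, Ideal.Quotient.eq.2 (by simpa using I.neg_mem hq)⟩
  · rintro ⟨u, hu⟩
    obtain ⟨g, rfl⟩ := Ideal.Quotient.mk_surjective u
    exact ⟨g, p - g * f, Ideal.Quotient.eq.1 hu.symm, by ring⟩

theorem sup_eq_sup_of_le_of_le_sup {I J L : Ideal R} (hJI : J ≤ I) (hIJ : I ≤ J ⊔ L) :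
    J ⊔ L = I ⊔ L :=
  le_antisymm (sup_le_sup_right hJI L) (sup_le hIJ le_sup_right)

theorem isSMulRegular_quotient_of_colon_eq {J : Ideal R} {x : R}
    (hx : J.colon (Ideal.span {x}) = J) : IsSMulRegular (R ⧸ J) x := by
  refine isSMulRegular_iff_right_eq_zero_of_smul.2 fun v hv => ?_
  obtain ⟨p, rfl⟩ := Ideal.Quotient.mk_surjective v
  refine Ideal.Quotient.eq_zero_iff_mem.2 ?_
  rw [← hx, Ideal.mem_colon_span_singleton, mul_comm]
  exact Ideal.Quotient.eq_zero_iff_mem.1 hv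

theorem exists_smul_eq_of_factor_eq_zero {I J : Ideal R} {x : R} (hJI : J ≤ I)
    (hIJ : I ≤ J ⊔ Ideal.span {x}) {v : R ⧸ J} (hv : Submodule.factor hJI v = 0) :
    ∃ w, x • w = v := by
  obtain ⟨p, rfl⟩ := Ideal.Quotient.mk_surjective v
  rw [factor_mk, Ideal.Quotient.eq_zero_iff_mem] at hv
  obtain ⟨g, q, hq, rfl⟩ := Ideal.mem_span_singleton_sup.1 (sup_comm J _ ▸ hIJ hv)
  exact ⟨Ideal.Quotient.mk _ g, Ideal.Quotient.eq.2 (by simpa [mul_comm] using J.neg_mem hq)⟩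

end ColonSequence

section ExtQuotient

universe u

variable {R : Type u} [CommRing R] {X : ModuleCat.{u} R}

theorem exists_linearMap_eq_smul {M N : Type*} [AddCommGroup M] [Module R M] [AddCommGroup N]
    [Module R N] {x : R} (hx : IsSMulRegular N x) (f : M →ₗ[R] N) (hf : ∀ m, ∃ n, x • n = f m) :
    ∃ g : M →ₗ[R] N, f = x • g := by
  choose g hg using hf
  refine ⟨⟨⟨g, fun a b => hx ?_⟩, fun r a => hx ?_⟩, LinearMap.ext fun m => (hg m).symm⟩
  · simp only [smul_add, hg, map_add]
  · simp only [RingHom.id_apply, smul_comm x r, hg, map_smul]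

/-- The vanishing of `Ext^i(X, R/I)`. -/
def ExtVanishes (X : ModuleCat.{u} R) (I : Ideal R) (i : ℕ) : Prop :=
  Subsingleton (Abelian.Ext X (ModuleCat.of R (R ⧸ I)) i)

/-- The sequence `0 → R/(I : f) → R/I → R/(I + (f)) → 0` in the category of modules. -/
def colonShortComplex (I : Ideal R) (f : R) : ShortComplex (ModuleCat.{u} R) :=
  ModuleCat.shortComplexOfCompEqZero (colonMul I f)
    (Submodule.factor (le_sup_left : I ≤ I ⊔ Ideal.span {f}))
    (exact_colonMul_factor I f).linearMap_comp_eq_zero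

theorem colonShortComplex_shortExact (I : Ideal R) (f : R) :
    (colonShortComplex I f).ShortExact :=
  ModuleCat.shortComplex_shortExact _ (exact_colonMul_factor I f) (colonMul_injective I f)
    (Submodule.factor_surjective le_sup_left)

variable {I J : Ideal R} {f x : R} {i : ℕ}

theorem ExtVanishes.of_colon_of_sup (h₁ : ExtVanishes X (I.colon (Ideal.span {f})) i)
    (h₃ : ExtVanishes X (I ⊔ Ideal.span {f}) i) : ExtVanishes X I i :=
  subsingleton_ext_X₂ (colonShortComplex_shortExact I f) h₁ h₃

theorem ExtVanishes.sup (h₂ : ExtVanishes X I i)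
    (h₁ : ExtVanishes X (I.colon (Ideal.span {f})) (i + 1)) :
    ExtVanishes X (I ⊔ Ideal.span {f}) i :=
  subsingleton_ext_X₃ (colonShortComplex_shortExact I f) h₂ h₁

theorem ExtVanishes.colon (h₂ : ExtVanishes X I i)
    (h₃ : ∀ j, j + 1 = i → ExtVanishes X (I ⊔ Ideal.span {f}) j) :
    ExtVanishes X (I.colon (Ideal.span {f})) i :=
  subsingleton_ext_X₁ (colonShortComplex_shortExact I f) h₂ h₃

theorem ExtVanishes.of_le_of_le_sup (h : ExtVanishes X I i) (hX : x • 𝟙 X = 0) (hJI : J ≤ I)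
    (hIJ : I ≤ J ⊔ Ideal.span {x}) (hx : J.colon (Ideal.span {x}) = J) : ExtVanishes X J i := by
  obtain ⟨g, hg⟩ := exists_linearMap_eq_smul (isSMulRegular_quotient_of_colon_eq hx)
    (Submodule.factor hJI).ker.subtype fun v => exists_smul_eq_of_factor_eq_zero hJI hIJ v.2
  have hexact : Function.Exact (Submodule.factor hJI).ker.subtype (Submodule.factor hJI) :=
    LinearMap.exact_subtype_ker_map _
  have hS : (ModuleCat.shortComplexOfCompEqZero _ _ hexact.linearMap_comp_eq_zero).ShortExact :=
    ModuleCat.shortComplex_shortExact _ hexact Subtype.val_injective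
      (Submodule.factor_surjective hJI)
  exact subsingleton_ext_X₂_of_eq_smul (R := R) hX hS (g := ModuleCat.ofHom g)
    (ModuleCat.hom_ext hg) h

theorem ExtVanishes.colon_of_le_of_le_sup {d : ℕ∞} (h : ∀ i : ℕ, i < d → ExtVanishes X I i)
    (hX : x • 𝟙 X = 0) (hJI : J ≤ I) (hIJ : I ≤ J ⊔ Ideal.span {x})
    (hx : J.colon (Ideal.span {x}) = J) (hi : i < d) :
    ExtVanishes X (I.colon (Ideal.span {x})) i := by
  have hJ : ∀ i : ℕ, i < d → ExtVanishes X J i := fun i hi =>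
    (h i hi).of_le_of_le_sup hX hJI hIJ hx
  refine (h i hi).colon ?_
  rintro i rfl
  rw [← sup_eq_sup_of_le_of_le_sup hJI hIJ]
  exact (hJ i (lt_trans (by exact_mod_cast i.lt_succ_self) hi)).sup (hx.symm ▸ hJ (i + 1) hi)

end ExtQuotient

section MonomialIdeal

variable {K : Type} [Field K] {n : ℕ} {I J : Ideal (MvPoly K (Fin n))} {a b d : Fin n →₀ ℕ}

theorem mono_zero : mono K (0 : Fin n →₀ ℕ) = 1 := rfl

theorem mono_add (a b : Fin n →₀ ℕ) : mono K (a + b) = mono K a * mono K b := by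
  simp only [mono, monomial_mul, one_mul]

theorem mono_mem_of_le (h : a ≤ d) (ha : mono K a ∈ I) : mono K d ∈ I := by
  obtain ⟨c, rfl⟩ := exists_add_of_le h
  rw [mono_add]
  exact I.mul_mem_right _ ha

theorem mem_of_forall_mono_mem {p : MvPoly K (Fin n)} (h : ∀ d ∈ p.support, mono K d ∈ I) :
    p ∈ I := by
  rw [p.as_sum]
  refine sum_mem fun d hd => ?_
  rw [← mul_one (coeff d p), ← C_mul_monomial]
  exact I.mul_mem_left _ (h d hd)

theorem isMonomialIdeal_iff :
    IsMonomialIdeal K I ↔ ∀ p ∈ I, ∀ d ∈ p.support, mono K d ∈ I := by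
  constructor
  · rintro ⟨S, rfl⟩ p hp d hd
    obtain ⟨a, ha, had⟩ := mem_ideal_span_monomial_image.1 hp d hd
    exact mono_mem_of_le had (Ideal.subset_span ⟨a, ha, rfl⟩)
  · intro h
    refine ⟨{d | mono K d ∈ I}, le_antisymm (fun p hp => ?_) (Ideal.span_le.2 ?_)⟩
    · exact mem_of_forall_mono_mem fun d hd => Ideal.subset_span ⟨d, h p hp d hd, rfl⟩
    · rintro _ ⟨d, hd, rfl⟩
      exact hd

theorem IsMonomialIdeal.le_iff (hI : IsMonomialIdeal K I) :
    I ≤ J ↔ ∀ d, mono K d ∈ I → mono K d ∈ J :=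
  ⟨fun h _ hd => h hd, fun h p hp => mem_of_forall_mono_mem fun d hd =>
    h d (isMonomialIdeal_iff.1 hI p hp d hd)⟩

theorem isMonomialIdeal_span_mono (b : Fin n →₀ ℕ) :
    IsMonomialIdeal K (Ideal.span {mono K b}) :=
  ⟨{b}, by rw [Set.image_singleton]⟩

theorem mono_mem_span_mono_iff : mono K d ∈ Ideal.span {mono K b} ↔ b ≤ d := by
  rw [Ideal.mem_span_singleton, mono, mono, monomial_dvd_monomial]
  simp

theorem IsMonomialIdeal.sup (hI : IsMonomialIdeal K I) (hJ : IsMonomialIdeal K J) :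
    IsMonomialIdeal K (I ⊔ J) := by
  obtain ⟨S, rfl⟩ := hI
  obtain ⟨T, rfl⟩ := hJ
  exact ⟨S ∪ T, by rw [Set.image_union, Ideal.span_union]⟩

theorem coeff_add_mul_mono (p : MvPoly K (Fin n)) (b d : Fin n →₀ ℕ) :
    coeff (d + b) (p * mono K b) = coeff d p := by
  rw [mono, coeff_mul_monomial, mul_one]

theorem mono_mem_colon_iff :
    mono K d ∈ I.colon (Ideal.span {mono K b}) ↔ mono K (d + b) ∈ I := by
  rw [Ideal.mem_colon_span_singleton, mono_add]

theorem IsMonomialIdeal.colon (hI : IsMonomialIdeal K I) (b : Fin n →₀ ℕ) :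
    IsMonomialIdeal K (I.colon (Ideal.span {mono K b})) := by
  refine isMonomialIdeal_iff.2 fun p hp d hd => mono_mem_colon_iff.2 ?_
  refine isMonomialIdeal_iff.1 hI _ (Ideal.mem_colon_span_singleton.1 hp) _ ?_
  rwa [mem_support_iff, coeff_add_mul_mono, ← mem_support_iff]

theorem IsMonomialIdeal.colon_induction {P : Ideal (MvPoly K (Fin n)) → Prop}
    (var : ∀ I : Ideal (MvPoly K (Fin n)), IsMonomialIdeal K I → P I → ∀ j : Fin n,
      P (I.colon (Ideal.span {mono K (Finsupp.single j 1)})))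
    (hI : IsMonomialIdeal K I) (h : P I) (b : Fin n →₀ ℕ) :
    P (I.colon (Ideal.span {mono K b})) := by
  induction b using Finsupp.induction_linear generalizing I with
  | zero => rwa [mono_zero, colon_span_singleton_one]
  | add a b iha ihb =>
    rw [mono_add, colon_span_singleton_mul]
    exact ihb (hI.colon a) (iha hI h)
  | single j m =>
    induction m generalizing I with
    | zero => rwa [Finsupp.single_zero, mono_zero, colon_span_singleton_one]
    | succ m ih =>
      rw [Finsupp.single_add, mono_add, colon_span_singleton_mul]
      exact var _ (hI.colon _) (ih hI h) j

/-- The ideal generated by the monomials of `I` that do not involve the variable `x_j`. -/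
noncomputable def varFreePart (I : Ideal (MvPoly K (Fin n))) (j : Fin n) :
    Ideal (MvPoly K (Fin n)) :=
  Ideal.span (mono K '' {d | mono K d ∈ I ∧ d j = 0})

variable {j : Fin n}

theorem isMonomialIdeal_varFreePart (I : Ideal (MvPoly K (Fin n))) (j : Fin n) :
    IsMonomialIdeal K (varFreePart I j) := ⟨_, rfl⟩

theorem erase_le (d : Fin n →₀ ℕ) (j : Fin n) : d.erase j ≤ d := fun i => by
  rcases eq_or_ne i j with rfl | hij
  · exact Finsupp.erase_same.trans_le (Nat.zero_le _)
  · exact (Finsupp.erase_ne hij).le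

theorem mono_mem_varFreePart_iff :
    mono K d ∈ varFreePart I j ↔ mono K (d.erase j) ∈ I := by
  constructor
  · intro h
    obtain ⟨a, ⟨ha, haj⟩, had⟩ := mem_ideal_span_monomial_image.1 h d (by simp [mono])
    refine mono_mem_of_le (fun i => ?_) ha
    rcases eq_or_ne i j with rfl | hij
    · exact haj.le.trans (Nat.zero_le _)
    · exact (had i).trans (Finsupp.erase_ne hij).ge
  · exact fun h => mono_mem_of_le (erase_le d j)
      (Ideal.subset_span ⟨d.erase j, ⟨h, Finsupp.erase_same⟩, rfl⟩)

theorem varFreePart_le (I : Ideal (MvPoly K (Fin n))) (j : Fin n) : varFreePart I j ≤ I := by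
  rw [varFreePart, Ideal.span_le]
  rintro _ ⟨d, ⟨hd, -⟩, rfl⟩
  exact hd

theorem colon_varFreePart (I : Ideal (MvPoly K (Fin n))) (j : Fin n) :
    (varFreePart I j).colon (Ideal.span {mono K (Finsupp.single j 1)}) = varFreePart I j := by
  refine le_antisymm ?_ Ideal.le_colon
  rw [((isMonomialIdeal_varFreePart I j).colon _).le_iff]
  intro d hd
  rwa [mono_mem_colon_iff, mono_mem_varFreePart_iff, Finsupp.erase_add, Finsupp.erase_single,
    add_zero, ← mono_mem_varFreePart_iff] at hd

theorem IsMonomialIdeal.le_varFreePart_sup (hI : IsMonomialIdeal K I) (j : Fin n) :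
    I ≤ varFreePart I j ⊔ Ideal.span {mono K (Finsupp.single j 1)} := by
  refine hI.le_iff.2 fun d hd => ?_
  by_cases hj : d j = 0
  · exact Ideal.mem_sup_left (Ideal.subset_span ⟨d, ⟨hd, hj⟩, rfl⟩)
  · exact Ideal.mem_sup_right <| mono_mem_span_mono_iff.2 <|
      Finsupp.single_le_iff.2 (Nat.one_le_iff_ne_zero.2 hj)

end MonomialIdeal

section Depth

variable {K : Type} [Field K] {n : ℕ} {I : Ideal (MvPoly K (Fin n))} {d : ℕ∞} {i : ℕ}

theorem le_depthQ_iff : d ≤ depthQ K (Fin n) I ↔ ∀ i : ℕ, i < d →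
    ExtVanishes (ModuleCat.of _ (MvPoly K (Fin n) ⧸ maxIdeal K (Fin n))) I i := by
  rw [depthQ, le_sInf_iff]
  constructor
  · refine fun h i hi => (subsingleton_ext_obj_iff (R := MvPoly K (Fin n)) _ i).1
      (not_nontrivial_iff_subsingleton.1 ?_)
    exact fun hn => (h i ⟨i, rfl, hn⟩).not_gt hi
  · rintro h _ ⟨i, rfl, hn⟩
    refine not_lt.1 fun hi => not_nontrivial_iff_subsingleton.2 ?_ hn
    exact (subsingleton_ext_obj_iff _ i).2 (h i hi)

theorem extVanishes_of_lt_depthQ (hi : i < depthQ K (Fin n) I) :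
    ExtVanishes (ModuleCat.of _ (MvPoly K (Fin n) ⧸ maxIdeal K (Fin n))) I i :=
  le_depthQ_iff.1 le_rfl i hi

theorem mono_single_mem_maxIdeal (j : Fin n) :
    mono K (Finsupp.single j 1) ∈ maxIdeal K (Fin n) :=
  Ideal.subset_span ⟨j, rfl⟩

theorem smul_id_quotient_eq_zero {R : Type*} [CommRing R] {I : Ideal R} {x : R} (hx : x ∈ I) :
    x • 𝟙 (ModuleCat.of R (R ⧸ I)) = 0 := by
  ext
  exact Ideal.Quotient.eq_zero_iff_mem.2 (I.mul_mem_right _ hx)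

theorem depthQ_le_colon (hI : IsMonomialIdeal K I) (b : Fin n →₀ ℕ) :
    depthQ K (Fin n) I ≤ depthQ K (Fin n) (I.colon (Ideal.span {mono K b})) :=
  hI.colon_induction (P := fun J => depthQ K (Fin n) I ≤ depthQ K (Fin n) J)
    (fun J hJ h j => h.trans <| le_depthQ_iff.2 fun _ =>
      ExtVanishes.colon_of_le_of_le_sup (le_depthQ_iff.1 le_rfl)
        (smul_id_quotient_eq_zero (mono_single_mem_maxIdeal j)) (varFreePart_le J j)
        (hJ.le_varFreePart_sup j) (colon_varFreePart J j)) le_rfl b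

theorem depthQ_sub_one_le_sup (hI : IsMonomialIdeal K I) (b : Fin n →₀ ℕ) :
    depthQ K (Fin n) I - 1 ≤ depthQ K (Fin n) (I ⊔ Ideal.span {mono K b}) := by
  refine le_depthQ_iff.2 fun i hi => ?_
  have hi' : ((i + 1 : ℕ) : ℕ∞) < depthQ K (Fin n) I := by
    exact_mod_cast lt_tsub_iff_right.1 hi
  exact (extVanishes_of_lt_depthQ ((Nat.cast_lt.2 i.lt_succ_self).trans hi')).sup
    (extVanishes_of_lt_depthQ (hi'.trans_le (depthQ_le_colon hI b)))

theorem sup_span_image_insert (I : Ideal (MvPoly K (Fin n))) (j : Fin n) (T : Finset (Fin n)) :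
    I ⊔ Ideal.span ((fun i => (X i : MvPoly K (Fin n))) '' ↑(insert j T)) =
      I ⊔ Ideal.span ((fun i => X i) '' ↑T) ⊔ Ideal.span {mono K (Finsupp.single j 1)} := by
  rw [Finset.coe_insert, Set.image_insert_eq, Ideal.span_insert, sup_assoc, sup_comm (Ideal.span _)]
  rfl

theorem IsMonomialIdeal.sup_span_image_X (hI : IsMonomialIdeal K I) (T : Finset (Fin n)) :
    IsMonomialIdeal K (I ⊔ Ideal.span ((fun i => X i) '' ↑T)) := by
  induction T using Finset.induction_on with
  | empty => simpa using hI
  | insert j T _ ih => exact sup_span_image_insert I j T ▸ ih.sup (isMonomialIdeal_span_mono _)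

theorem depthQ_sub_card_le_sup (hI : IsMonomialIdeal K I) (T : Finset (Fin n)) :
    depthQ K (Fin n) I - T.card ≤
      depthQ K (Fin n) (I ⊔ Ideal.span ((fun i => X i) '' ↑T)) := by
  induction T using Finset.induction_on with
  | empty => simp
  | insert j T hj ih =>
    rw [sup_span_image_insert, Finset.card_insert_of_notMem hj, Nat.cast_add, Nat.cast_one,
      ← tsub_tsub]
    exact (tsub_le_tsub_right ih 1).trans (depthQ_sub_one_le_sup (hI.sup_span_image_X T) _)

theorem depthQ_eq_colon_or_eq_sup (hI : IsMonomialIdeal K I) (b : Fin n →₀ ℕ) :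
    depthQ K (Fin n) I = depthQ K (Fin n) (I.colon (Ideal.span {mono K b})) ∨
      depthQ K (Fin n) I = depthQ K (Fin n) (I ⊔ Ideal.span {mono K b}) := by
  refine or_iff_not_imp_left.2 fun hne => ?_
  have hlt := (depthQ_le_colon hI b).lt_of_ne hne
  have hcolon : ∀ i : ℕ, i ≤ depthQ K (Fin n) I → ExtVanishes _ (I.colon _) i := fun i hi =>
    extVanishes_of_lt_depthQ (hi.trans_lt hlt)
  refine le_antisymm (le_depthQ_iff.2 fun i hi => ?_) (le_of_not_gt fun hgt => ?_)
  · exact (extVanishes_of_lt_depthQ hi).sup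
      (hcolon _ (by exact_mod_cast Order.add_one_le_of_lt hi))
  · have hle : depthQ K (Fin n) I + 1 ≤ depthQ K (Fin n) I := le_depthQ_iff.2 fun i hi => by
      have hi' := (ENat.lt_add_one_iff hlt.ne_top).1 hi
      exact (hcolon i hi').of_colon_of_sup (extVanishes_of_lt_depthQ (hi'.trans_lt hgt))
    exact ((ENat.add_one_le_iff hlt.ne_top).1 hle).false

end Depth

section KoszulCone

/-- The underlying group of the Koszul complex on `m` elements with coefficients in `M`, built as
an iterated mapping cone: `K_{m+1} = K_m ⊕ K_m e_m`. -/
def KoszulCone (M : Type*) : ℕ → Type _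
  | 0 => M
  | m + 1 => KoszulCone M m × KoszulCone M m

/-- The element `a + b e_m` of the Koszul complex on `m + 1` elements. -/
def KoszulCone.mk {M : Type*} {m : ℕ} (a b : KoszulCone M m) : KoszulCone M (m + 1) := (a, b)

theorem KoszulCone.exists_mk_eq {M : Type*} {m : ℕ} (c : KoszulCone M (m + 1)) :
    ∃ a b : KoszulCone M m, KoszulCone.mk a b = c :=
  ⟨c.1, c.2, rfl⟩

theorem KoszulCone.mk_inj {M : Type*} {m : ℕ} {a b a' b' : KoszulCone M m} :
    KoszulCone.mk a b = KoszulCone.mk a' b' ↔ a = a' ∧ b = b' := Prod.mk_inj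

instance instAddCommGroupKoszulCone (M : Type*) [AddCommGroup M] :
    ∀ m, AddCommGroup (KoszulCone M m)
  | 0 => inferInstanceAs (AddCommGroup M)
  | m + 1 =>
    letI := instAddCommGroupKoszulCone M m
    inferInstanceAs (AddCommGroup (KoszulCone M m × KoszulCone M m))

instance instModuleKoszulCone (R : Type*) [CommRing R] (M : Type*) [AddCommGroup M] [Module R M] :
    ∀ m, Module R (KoszulCone M m)
  | 0 => inferInstanceAs (Module R M)
  | m + 1 =>
    letI := instModuleKoszulCone R M m
    inferInstanceAs (Module R (KoszulCone M m × KoszulCone M m))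

variable {R : Type*} [CommRing R] {M : Type*} [AddCommGroup M] [Module R M]
variable {M' : Type*} [AddCommGroup M'] [Module R M']
variable {M'' : Type*} [AddCommGroup M''] [Module R M'']

theorem KoszulCone.mk_add_mk {m : ℕ} (a b a' b' : KoszulCone M m) :
    KoszulCone.mk a b + KoszulCone.mk a' b' = KoszulCone.mk (a + a') (b + b') := rfl

theorem KoszulCone.mk_sub_mk {m : ℕ} (a b a' b' : KoszulCone M m) :
    KoszulCone.mk a b - KoszulCone.mk a' b' = KoszulCone.mk (a - a') (b - b') := rfl

theorem KoszulCone.smul_mk {m : ℕ} (r : R) (a b : KoszulCone M m) :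
    r • KoszulCone.mk a b = KoszulCone.mk (r • a) (r • b) := rfl

theorem KoszulCone.mk_zero {m : ℕ} : KoszulCone.mk (0 : KoszulCone M m) 0 = 0 := rfl

theorem KoszulCone.mk_eq_zero {m : ℕ} {a b : KoszulCone M m} :
    KoszulCone.mk a b = 0 ↔ a = 0 ∧ b = 0 := KoszulCone.mk_inj

/-- The Koszul differential for the elements `y 0, …, y (m - 1)`:
`∂ (a + b e_m) = (∂ a + y_m b) - (∂ b) e_m`. -/
def koszulD (M : Type*) [AddCommGroup M] [Module R M] (y : ℕ → R) :
    ∀ m, KoszulCone M m →ₗ[R] KoszulCone M m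
  | 0 => 0
  | m + 1 => LinearMap.prod (M := KoszulCone M m × KoszulCone M m)
      (koszulD M y m ∘ₗ LinearMap.fst R _ _ + y m • LinearMap.snd R _ _)
      (-(koszulD M y m ∘ₗ LinearMap.snd R _ _))

theorem koszulD_mk (y : ℕ → R) (m : ℕ) (a b : KoszulCone M m) :
    koszulD M y (m + 1) (.mk a b) = .mk (koszulD M y m a + y m • b) (-koszulD M y m b) := rfl

theorem koszulD_koszulD (y : ℕ → R) (m : ℕ) (c : KoszulCone M m) :
    koszulD M y m (koszulD M y m c) = 0 := by
  induction m with
  | zero => rfl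
  | succ m ih =>
    obtain ⟨a, b, rfl⟩ := c.exists_mk_eq
    rw [koszulD_mk, koszulD_mk, KoszulCone.mk_eq_zero]
    constructor
    · rw [map_add, ih, map_smul, smul_neg, zero_add, add_neg_cancel]
    · rw [map_neg, ih, neg_zero, neg_zero]

/-- The map of Koszul complexes induced by a map of coefficients. The latter is only assumed to be
additive, in order to cover maps that commute with just some of the elements `y j`. -/
def koszulMap (φ : M →+ M') : ∀ m, KoszulCone M m →+ KoszulCone M' m
  | 0 => φ
  | m + 1 => AddMonoidHom.prodMap (koszulMap φ m) (koszulMap φ m)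

theorem koszulMap_mk (φ : M →+ M') (m : ℕ) (a b : KoszulCone M m) :
    koszulMap φ (m + 1) (.mk a b) = .mk (koszulMap φ m a) (koszulMap φ m b) := rfl

theorem koszulMap_smul {φ : M →+ M'} {r : R} (h : ∀ v, φ (r • v) = r • φ v) (m : ℕ)
    (c : KoszulCone M m) : koszulMap φ m (r • c) = r • koszulMap φ m c := by
  induction m with
  | zero => exact h c
  | succ m ih =>
    obtain ⟨a, b, rfl⟩ := c.exists_mk_eq
    rw [KoszulCone.smul_mk, koszulMap_mk, koszulMap_mk, KoszulCone.smul_mk, ih, ih]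

theorem koszulMap_smul_of_leftInverse {φ : M →+ M} {r : R} (h : ∀ v, φ (r • v) = v) (m : ℕ)
    (c : KoszulCone M m) : koszulMap φ m (r • c) = c := by
  induction m with
  | zero => exact h c
  | succ m ih =>
    obtain ⟨a, b, rfl⟩ := c.exists_mk_eq
    rw [KoszulCone.smul_mk, koszulMap_mk, ih, ih]

theorem koszulMap_toAddMonoidHom (r : R) (m : ℕ) (c : KoszulCone M m) :
    koszulMap (DistribSMul.toAddMonoidHom M r) m c = r • c := by
  induction m with
  | zero => rfl
  | succ m ih =>
    obtain ⟨a, b, rfl⟩ := c.exists_mk_eq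
    rw [koszulMap_mk, ih, ih, KoszulCone.smul_mk]

theorem koszulMap_koszulD {y : ℕ → R} {φ : M →+ M'} {m : ℕ}
    (h : ∀ j < m, ∀ v, φ (y j • v) = y j • φ v) (c : KoszulCone M m) :
    koszulMap φ m (koszulD M y m c) = koszulD M' y m (koszulMap φ m c) := by
  induction m with
  | zero => exact map_zero φ
  | succ m ih =>
    obtain ⟨a, b, rfl⟩ := c.exists_mk_eq
    have ih' := ih fun j hj => h j (hj.trans m.lt_succ_self)
    rw [koszulD_mk, koszulMap_mk, koszulMap_mk, koszulD_mk, map_add, map_neg, ih', ih',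
      koszulMap_smul (h m m.lt_succ_self)]

theorem koszulMap_koszulD_of_linear (y : ℕ → R) (φ : M →ₗ[R] M') (m : ℕ) (c : KoszulCone M m) :
    koszulMap (φ : M →+ M') m (koszulD M y m c) = koszulD M' y m (koszulMap (φ : M →+ M') m c) :=
  koszulMap_koszulD (fun j _ => φ.map_smul (y j)) c

theorem koszulMap_injective {φ : M →+ M'} (h : Function.Injective φ) (m : ℕ) :
    Function.Injective (koszulMap φ m) := by
  induction m with
  | zero => exact h
  | succ m ih => exact Function.Injective.prodMap ih ih

theorem koszulMap_koszulMap_eq_zero {φ : M →+ M'} {ψ : M' →+ M''} (h : ∀ v, ψ (φ v) = 0) (m : ℕ)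
    (c : KoszulCone M m) : koszulMap ψ m (koszulMap φ m c) = 0 := by
  induction m with
  | zero => exact h c
  | succ m ih =>
    obtain ⟨a, b, rfl⟩ := c.exists_mk_eq
    rw [koszulMap_mk, koszulMap_mk, ih, ih, KoszulCone.mk_zero]

theorem exists_koszulMap_eq_of_koszulMap_eq_zero {φ : M →+ M'} {ψ : M' →+ M''}
    (h : ∀ v, ψ v = 0 → ∃ u, φ u = v) {m : ℕ} {c : KoszulCone M' m} (hc : koszulMap ψ m c = 0) :
    ∃ a, koszulMap φ m a = c := by
  induction m with
  | zero => exact h c hc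
  | succ m ih =>
    obtain ⟨a, b, rfl⟩ := c.exists_mk_eq
    rw [koszulMap_mk, KoszulCone.mk_eq_zero] at hc
    obtain ⟨a', rfl⟩ := ih hc.1
    obtain ⟨b', rfl⟩ := ih hc.2
    exact ⟨.mk a' b', rfl⟩

/-- Left multiplication by `e_j` on the Koszul complex, a homotopy from multiplication by `y j`
to zero. -/
def koszulHomotopy (M : Type*) [AddCommGroup M] (j : ℕ) : ∀ m, KoszulCone M m →+ KoszulCone M m
  | 0 => 0
  | m + 1 =>
    if j = m then
      AddMonoidHom.prod (M := KoszulCone M m × KoszulCone M m) 0 (AddMonoidHom.fst _ _)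
    else
      AddMonoidHom.prodMap (koszulHomotopy M j m) (-koszulHomotopy M j m)

theorem koszulHomotopy_mk_self (m : ℕ) (a b : KoszulCone M m) :
    koszulHomotopy M m (m + 1) (.mk a b) = .mk 0 a :=
  congrArg (fun g : KoszulCone M m × KoszulCone M m →+ KoszulCone M m × KoszulCone M m => g (a, b))
    (if_pos rfl)

theorem koszulHomotopy_mk_of_ne {j m : ℕ} (h : j ≠ m) (a b : KoszulCone M m) :
    koszulHomotopy M j (m + 1) (.mk a b) =
      .mk (koszulHomotopy M j m a) (-koszulHomotopy M j m b) :=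
  congrArg (fun g : KoszulCone M m × KoszulCone M m →+ KoszulCone M m × KoszulCone M m => g (a, b))
    (if_neg h)

theorem koszulHomotopy_smul (j : ℕ) (r : R) (m : ℕ) (c : KoszulCone M m) :
    koszulHomotopy M j m (r • c) = r • koszulHomotopy M j m c := by
  induction m with
  | zero => exact (smul_zero r).symm
  | succ m ih =>
    obtain ⟨a, b, rfl⟩ := c.exists_mk_eq
    obtain rfl | h := eq_or_ne j m
    · rw [KoszulCone.smul_mk, koszulHomotopy_mk_self, koszulHomotopy_mk_self, KoszulCone.smul_mk,
        smul_zero]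
    · rw [KoszulCone.smul_mk, koszulHomotopy_mk_of_ne h, koszulHomotopy_mk_of_ne h,
        KoszulCone.smul_mk, ih, ih, smul_neg]

theorem koszulD_koszulHomotopy_add (y : ℕ → R) {j m : ℕ} (hj : j < m) (c : KoszulCone M m) :
    koszulD M y m (koszulHomotopy M j m c) + koszulHomotopy M j m (koszulD M y m c) = y j • c := by
  induction m with
  | zero => exact absurd hj j.not_lt_zero
  | succ m ih =>
    obtain ⟨a, b, rfl⟩ := c.exists_mk_eq
    obtain rfl | h := eq_or_ne j m
    · rw [koszulHomotopy_mk_self, koszulD_mk, koszulD_mk, koszulHomotopy_mk_self,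
        KoszulCone.mk_add_mk, KoszulCone.smul_mk, map_zero, zero_add, add_zero,
        neg_add_cancel_left]
    · have ih' : ∀ c, _ := fun c => ih (Nat.lt_of_le_of_ne (Nat.le_of_lt_succ hj) h) c
      rw [koszulHomotopy_mk_of_ne h, koszulD_mk, koszulD_mk, koszulHomotopy_mk_of_ne h,
        KoszulCone.mk_add_mk, KoszulCone.smul_mk, ← ih' a, ← ih' b, map_add, koszulHomotopy_smul]
      congr 1
      · rw [smul_neg]; abel
      · rw [map_neg, map_neg, neg_neg, neg_neg]

/-- The piece of homological degree `i` and internal degree `e` of the Koszul complex of a module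
whose internal degree `e` piece is `gr e`; every `e_j` has bidegree `(1, 1)`. -/
def koszulPiece (gr : ℤ → AddSubgroup M) : ∀ m : ℕ, ℤ → ℤ → AddSubgroup (KoszulCone M m)
  | 0, i, e => if i = 0 then gr e else ⊥
  | m + 1, i, e => AddSubgroup.prod (koszulPiece gr m i e) (koszulPiece gr m (i - 1) (e - 1))

variable {gr : ℤ → AddSubgroup M} {gr' : ℤ → AddSubgroup M'} {gr'' : ℤ → AddSubgroup M''}

theorem koszulPiece_zero_zero (e : ℤ) : koszulPiece gr 0 0 e = gr e := if_pos rfl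

theorem koszulPiece_zero_of_ne {i : ℤ} (hi : i ≠ 0) (e : ℤ) : koszulPiece gr 0 i e = ⊥ :=
  if_neg hi

theorem mk_mem_koszulPiece_iff {m : ℕ} {i e : ℤ} {a b : KoszulCone M m} :
    .mk a b ∈ koszulPiece gr (m + 1) i e ↔
      a ∈ koszulPiece gr m i e ∧ b ∈ koszulPiece gr m (i - 1) (e - 1) := Iff.rfl

theorem eq_zero_of_mem_koszulPiece_of_neg {m : ℕ} {i : ℤ} (hi : i < 0) {e : ℤ}
    {c : KoszulCone M m} (hc : c ∈ koszulPiece gr m i e) : c = 0 := by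
  induction m generalizing i e with
  | zero => rwa [koszulPiece_zero_of_ne hi.ne] at hc
  | succ m ih =>
    obtain ⟨a, b, rfl⟩ := c.exists_mk_eq
    obtain ⟨ha, hb⟩ := mk_mem_koszulPiece_iff.1 hc
    rw [ih hi ha, ih (by lia) hb, KoszulCone.mk_zero]

theorem koszulPiece_mono {gr₀ : ℤ → AddSubgroup M} (h : ∀ e, gr₀ e ≤ gr e) (m : ℕ) (i e : ℤ) :
    koszulPiece gr₀ m i e ≤ koszulPiece gr m i e := by
  induction m generalizing i e with
  | zero =>
    obtain rfl | hi := eq_or_ne i 0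
    · rw [koszulPiece_zero_zero, koszulPiece_zero_zero]
      exact h e
    · rw [koszulPiece_zero_of_ne hi, koszulPiece_zero_of_ne hi]
  | succ m ih => exact AddSubgroup.prod_mono (ih i e) (ih (i - 1) (e - 1))

theorem koszulPiece_sub (gr : ℤ → AddSubgroup M) (s : ℤ) (m : ℕ) (i e : ℤ) :
    koszulPiece (fun e => gr (e - s)) m i e = koszulPiece gr m i (e - s) := by
  induction m generalizing i e with
  | zero => rfl
  | succ m ih => rw [koszulPiece, koszulPiece, ih, ih, sub_right_comm e s 1]

theorem koszulMap_mem {φ : M →+ M'} (h : ∀ e, ∀ v ∈ gr e, φ v ∈ gr' e) {m : ℕ} {i e : ℤ}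
    {c : KoszulCone M m} (hc : c ∈ koszulPiece gr m i e) :
    koszulMap φ m c ∈ koszulPiece gr' m i e := by
  induction m generalizing i e with
  | zero =>
    obtain rfl | hi := eq_or_ne i 0
    · rw [koszulPiece_zero_zero] at hc ⊢
      exact h e c hc
    · rw [koszulPiece_zero_of_ne hi, AddSubgroup.mem_bot] at hc
      rw [hc, map_zero]
      exact zero_mem _
  | succ m ih =>
    obtain ⟨a, b, rfl⟩ := c.exists_mk_eq
    obtain ⟨ha, hb⟩ := mk_mem_koszulPiece_iff.1 hc
    exact mk_mem_koszulPiece_iff.2 ⟨ih ha, ih hb⟩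

theorem mem_of_koszulMap_mem {φ : M →+ M'} (hφ : Function.Injective φ)
    (h : ∀ e v, φ v ∈ gr' e → v ∈ gr e) {m : ℕ} {i e : ℤ} {c : KoszulCone M m}
    (hc : koszulMap φ m c ∈ koszulPiece gr' m i e) : c ∈ koszulPiece gr m i e := by
  induction m generalizing i e with
  | zero =>
    obtain rfl | hi := eq_or_ne i 0
    · rw [koszulPiece_zero_zero] at hc ⊢
      exact h e c hc
    · rw [koszulPiece_zero_of_ne hi] at hc ⊢
      exact (map_eq_zero_iff φ hφ).1 hc
  | succ m ih =>
    obtain ⟨a, b, rfl⟩ := c.exists_mk_eq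
    obtain ⟨ha, hb⟩ := mk_mem_koszulPiece_iff.1 hc
    exact mk_mem_koszulPiece_iff.2 ⟨ih ha, ih hb⟩

theorem exists_koszulMap_eq {ψ : M →+ M'} (h : ∀ e, ∀ v ∈ gr' e, ∃ u ∈ gr e, ψ u = v)
    {m : ℕ} {i e : ℤ} {c : KoszulCone M' m} (hc : c ∈ koszulPiece gr' m i e) :
    ∃ b ∈ koszulPiece gr m i e, koszulMap ψ m b = c := by
  induction m generalizing i e with
  | zero =>
    obtain rfl | hi := eq_or_ne i 0
    · rw [koszulPiece_zero_zero] at hc ⊢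
      exact h e c hc
    · rw [koszulPiece_zero_of_ne hi, AddSubgroup.mem_bot] at hc
      exact ⟨0, zero_mem _, (map_zero ψ).trans hc.symm⟩
  | succ m ih =>
    obtain ⟨a, b, rfl⟩ := c.exists_mk_eq
    obtain ⟨ha, hb⟩ := mk_mem_koszulPiece_iff.1 hc
    obtain ⟨a', ha', rfl⟩ := ih ha
    obtain ⟨b', hb', rfl⟩ := ih hb
    exact ⟨.mk a' b', mk_mem_koszulPiece_iff.2 ⟨ha', hb'⟩, rfl⟩

/-- The graded pieces `gr` are compatible with multiplication by `y j`, `j < m`, these elements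
being of degree one. -/
def IsKoszulStable (y : ℕ → R) (m : ℕ) (gr : ℤ → AddSubgroup M) : Prop :=
  ∀ j < m, ∀ e, ∀ v ∈ gr (e - 1), y j • v ∈ gr e

theorem smul_mem_koszulPiece {r : R} (h : ∀ e, ∀ v ∈ gr (e - 1), r • v ∈ gr e) {m : ℕ} {i e : ℤ}
    {c : KoszulCone M m} (hc : c ∈ koszulPiece gr m i (e - 1)) :
    r • c ∈ koszulPiece gr m i e := by
  rw [← koszulPiece_sub] at hc
  rw [← koszulMap_toAddMonoidHom]
  exact koszulMap_mem h hc

theorem koszulD_mem {y : ℕ → R} {m : ℕ} (h : IsKoszulStable y m gr) {i e : ℤ}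
    {c : KoszulCone M m} (hc : c ∈ koszulPiece gr m i e) :
    koszulD M y m c ∈ koszulPiece gr m (i - 1) e := by
  induction m generalizing i e with
  | zero => exact zero_mem _
  | succ m ih =>
    obtain ⟨a, b, rfl⟩ := c.exists_mk_eq
    obtain ⟨ha, hb⟩ := mk_mem_koszulPiece_iff.1 hc
    have hm : IsKoszulStable y m gr := fun j hj => h j (hj.trans m.lt_succ_self)
    exact mk_mem_koszulPiece_iff.2
      ⟨add_mem (ih hm ha) (smul_mem_koszulPiece (h m m.lt_succ_self) hb), neg_mem (ih hm hb)⟩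

theorem koszulHomotopy_mem (j : ℕ) {m : ℕ} {i e : ℤ} {c : KoszulCone M m}
    (hc : c ∈ koszulPiece gr m i (e - 1)) :
    koszulHomotopy M j m c ∈ koszulPiece gr m (i + 1) e := by
  induction m generalizing i e with
  | zero => exact zero_mem _
  | succ m ih =>
    obtain ⟨a, b, rfl⟩ := c.exists_mk_eq
    obtain ⟨ha, hb⟩ := mk_mem_koszulPiece_iff.1 hc
    obtain rfl | h := eq_or_ne j m
    · rw [koszulHomotopy_mk_self, mk_mem_koszulPiece_iff, add_sub_cancel_right]
      exact ⟨zero_mem _, ha⟩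
    · rw [koszulHomotopy_mk_of_ne h, mk_mem_koszulPiece_iff, add_sub_right_comm]
      exact ⟨ih ha, neg_mem (ih hb)⟩

/-- Vanishing of the Koszul homology `H_i(y_0, …, y_{m-1}; M)` in internal degree `e`. For the
variables of a polynomial ring over `K` this is the vanishing of `Tor_i(K, M)_e`. -/
def KoszulVanishes (y : ℕ → R) (m : ℕ) (gr : ℤ → AddSubgroup M) (i e : ℤ) : Prop :=
  ∀ c ∈ koszulPiece gr m i e, koszulD M y m c = 0 →
    ∃ b ∈ koszulPiece gr m (i + 1) e, koszulD M y m b = c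

theorem koszulVanishes_of_neg (y : ℕ → R) (m : ℕ) (gr : ℤ → AddSubgroup M) {i : ℤ} (hi : i < 0)
    (e : ℤ) : KoszulVanishes y m gr i e := fun _ hc _ =>
  ⟨0, zero_mem _, (map_zero _).trans (eq_zero_of_mem_koszulPiece_of_neg hi hc).symm⟩

theorem koszulVanishes_sub_iff (y : ℕ → R) (m : ℕ) (gr : ℤ → AddSubgroup M) (s i e : ℤ) :
    KoszulVanishes y m (fun e => gr (e - s)) i e ↔ KoszulVanishes y m gr i (e - s) := by
  simp only [KoszulVanishes, koszulPiece_sub]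

/-- A short exact sequence of graded modules. The outer terms carry the gradings induced by the
middle one. -/
structure GradedShortExact (y : ℕ → R) (m : ℕ) (gr : ℤ → AddSubgroup M) (φ : M →ₗ[R] M')
    (gr' : ℤ → AddSubgroup M') (ψ : M' →ₗ[R] M'') (gr'' : ℤ → AddSubgroup M'') : Prop where
  stable : IsKoszulStable y m gr'
  injective : Function.Injective φ
  exact : Function.Exact φ ψ
  map_mem_iff : ∀ e v, φ v ∈ gr' e ↔ v ∈ gr e
  map_mem : ∀ e, ∀ v ∈ gr' e, ψ v ∈ gr'' e
  exists_map_eq : ∀ e, ∀ v ∈ gr'' e, ∃ u ∈ gr' e, ψ u = v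

section LongExactSequence

variable {y : ℕ → R} {m : ℕ} {φ : M →ₗ[R] M'} {ψ : M' →ₗ[R] M''}

theorem GradedShortExact.exists_koszulMap_left_eq
    (S : GradedShortExact y m gr φ gr' ψ gr'') {i e : ℤ} {c : KoszulCone M' m}
    (hc : c ∈ koszulPiece gr' m i e) (h0 : koszulMap (ψ : M' →+ M'') m c = 0) :
    ∃ a ∈ koszulPiece gr m i e, koszulMap (φ : M →+ M') m a = c := by
  obtain ⟨a, rfl⟩ := exists_koszulMap_eq_of_koszulMap_eq_zero (φ := (φ : M →+ M'))
    (ψ := (ψ : M' →+ M'')) (fun v => (S.exact v).1) h0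
  exact ⟨a, mem_of_koszulMap_mem S.injective (fun e v => (S.map_mem_iff e v).1) hc, rfl⟩

theorem GradedShortExact.koszulMap_koszulMap (S : GradedShortExact y m gr φ gr' ψ gr'')
    (a : KoszulCone M m) : koszulMap (ψ : M' →+ M'') m (koszulMap (φ : M →+ M') m a) = 0 :=
  koszulMap_koszulMap_eq_zero (φ := (φ : M →+ M')) (ψ := (ψ : M' →+ M''))
    S.exact.apply_apply_eq_zero m a

theorem GradedShortExact.koszulMap_left_mem (S : GradedShortExact y m gr φ gr' ψ gr'')
    {i e : ℤ} {a : KoszulCone M m} (ha : a ∈ koszulPiece gr m i e) :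
    koszulMap (φ : M →+ M') m a ∈ koszulPiece gr' m i e :=
  koszulMap_mem (fun e v => (S.map_mem_iff e v).2) ha

theorem KoszulVanishes.mid (S : GradedShortExact y m gr φ gr' ψ gr'') {i e : ℤ}
    (hA : KoszulVanishes y m gr i e) (hC : KoszulVanishes y m gr'' i e) :
    KoszulVanishes y m gr' i e := by
  intro c hc hdc
  obtain ⟨_, hb'', hdb''⟩ := hC (koszulMap (ψ : M' →+ M'') m c) (koszulMap_mem S.map_mem hc)
    (by rw [← koszulMap_koszulD_of_linear, hdc, map_zero])
  obtain ⟨b, hb, rfl⟩ := exists_koszulMap_eq (ψ := (ψ : M' →+ M'')) S.exists_map_eq hb''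
  have hdb : koszulD M' y m b ∈ koszulPiece gr' m i e := by
    simpa only [add_sub_cancel_right] using koszulD_mem S.stable hb
  obtain ⟨a, ha, hac⟩ := S.exists_koszulMap_left_eq (sub_mem hc hdb)
    (by rw [map_sub, koszulMap_koszulD_of_linear, hdb'', sub_self])
  have hda : koszulD M y m a = 0 := koszulMap_injective (φ := (φ : M →+ M')) S.injective m <| by
    rw [koszulMap_koszulD_of_linear, hac, map_sub, hdc, koszulD_koszulD, sub_self, map_zero]
  obtain ⟨a', ha', rfl⟩ := hA a ha hda
  refine ⟨b + koszulMap (φ : M →+ M') m a', add_mem hb (S.koszulMap_left_mem ha'), ?_⟩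
  rw [map_add, ← koszulMap_koszulD_of_linear, hac, add_sub_cancel]

theorem KoszulVanishes.right (S : GradedShortExact y m gr φ gr' ψ gr'') {i e : ℤ}
    (hB : KoszulVanishes y m gr' i e) (hA : KoszulVanishes y m gr (i - 1) e) :
    KoszulVanishes y m gr'' i e := by
  intro c hc hdc
  obtain ⟨b, hb, rfl⟩ := exists_koszulMap_eq (ψ := (ψ : M' →+ M'')) S.exists_map_eq hc
  rw [← koszulMap_koszulD_of_linear] at hdc
  obtain ⟨a, ha, hab⟩ :=
    S.exists_koszulMap_left_eq (koszulD_mem S.stable hb) hdc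
  have hda : koszulD M y m a = 0 := koszulMap_injective (φ := (φ : M →+ M')) S.injective m <| by
    rw [koszulMap_koszulD_of_linear, hab, koszulD_koszulD, map_zero]
  obtain ⟨a', ha', rfl⟩ := hA a ha hda
  rw [sub_add_cancel] at ha'
  obtain ⟨b', hb', hdb'⟩ := hB (b - koszulMap (φ : M →+ M') m a')
    (sub_mem hb (S.koszulMap_left_mem ha'))
    (by rw [map_sub, ← koszulMap_koszulD_of_linear, hab, sub_self])
  refine ⟨koszulMap (ψ : M' →+ M'') m b', koszulMap_mem S.map_mem hb', ?_⟩
  rw [← koszulMap_koszulD_of_linear, hdb', map_sub, S.koszulMap_koszulMap, sub_zero]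

theorem KoszulVanishes.left (S : GradedShortExact y m gr φ gr' ψ gr'') {i e : ℤ}
    (hB : KoszulVanishes y m gr' i e) (hC : KoszulVanishes y m gr'' (i + 1) e) :
    KoszulVanishes y m gr i e := by
  intro a ha hda
  obtain ⟨b, hb, hba⟩ := hB (koszulMap (φ : M →+ M') m a) (S.koszulMap_left_mem ha)
    (by rw [← koszulMap_koszulD_of_linear, hda, map_zero])
  obtain ⟨_, hc, hcb⟩ := hC (koszulMap (ψ : M' →+ M'') m b) (koszulMap_mem S.map_mem hb)
    (by rw [← koszulMap_koszulD_of_linear, hba, S.koszulMap_koszulMap])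
  obtain ⟨b', hb', rfl⟩ := exists_koszulMap_eq (ψ := (ψ : M' →+ M'')) S.exists_map_eq hc
  have hdb : koszulD M' y m b' ∈ koszulPiece gr' m (i + 1) e := by
    simpa only [add_sub_cancel_right] using koszulD_mem S.stable hb'
  obtain ⟨a', ha', haa'⟩ := S.exists_koszulMap_left_eq (sub_mem hb hdb)
    (by rw [map_sub, koszulMap_koszulD_of_linear, hcb, sub_self])
  refine ⟨a', ha', koszulMap_injective (φ := (φ : M →+ M')) S.injective m ?_⟩
  rw [koszulMap_koszulD_of_linear, haa', map_sub, koszulD_koszulD, sub_zero, hba]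

/- The kernel of `ψ` lies in `y j M'`, and `y j` is regular on `M'`, so the map from the homology
of the kernel to that of `M'` factors through multiplication by `y j`, which is null-homotopic. -/
theorem KoszulVanishes.of_ker_le_range_smul (stable : IsKoszulStable y m gr')
    (map_mem : ∀ e, ∀ v ∈ gr' e, ψ v ∈ gr'' e)
    (exists_map_eq : ∀ e, ∀ v ∈ gr'' e, ∃ u ∈ gr' e, ψ u = v) {j : ℕ} (hj : j < m)
    (regular : IsSMulRegular M' (y j)) (smul_mem : ∀ e v, y j • v ∈ gr' e → v ∈ gr' (e - 1))
    (ker : ∀ v, ψ v = 0 → ∃ u, y j • u = v) {i e : ℤ} (hC : KoszulVanishes y m gr'' i e) :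
    KoszulVanishes y m gr' i e := by
  intro z hz hdz
  obtain ⟨_, hc, hdc⟩ := hC (koszulMap (ψ : M' →+ M'') m z) (koszulMap_mem map_mem hz)
    (by rw [← koszulMap_koszulD_of_linear, hdz, map_zero])
  obtain ⟨b, hb, rfl⟩ := exists_koszulMap_eq (ψ := (ψ : M' →+ M'')) exists_map_eq hc
  have hdb : koszulD M' y m b ∈ koszulPiece gr' m i e := by
    simpa only [add_sub_cancel_right] using koszulD_mem stable hb
  have hμ : Function.Injective (DistribSMul.toAddMonoidHom M' (y j)) := regular
  obtain ⟨w, hw⟩ := exists_koszulMap_eq_of_koszulMap_eq_zero (ψ := (ψ : M' →+ M''))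
    (φ := DistribSMul.toAddMonoidHom M' (y j)) ker (c := z - koszulD M' y m b)
    (by rw [map_sub, koszulMap_koszulD_of_linear, hdc, sub_self])
  have hw_mem : w ∈ koszulPiece gr' m i (e - 1) := by
    rw [← koszulPiece_sub]
    exact mem_of_koszulMap_mem hμ smul_mem (hw ▸ sub_mem hz hdb)
  rw [koszulMap_toAddMonoidHom] at hw
  have hdw : koszulD M' y m w = 0 := koszulMap_injective hμ m <| by
    rw [koszulMap_toAddMonoidHom, ← map_smul, hw, map_sub, hdz, koszulD_koszulD, sub_self, map_zero]
  have hhw : koszulD M' y m (koszulHomotopy M' j m w) = y j • w := by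
    rw [← koszulD_koszulHomotopy_add y hj w, hdw, map_zero, add_zero]
  exact ⟨b + koszulHomotopy M' j m w, add_mem hb (koszulHomotopy_mem j hw_mem),
    by rw [map_add, hhw, hw, add_sub_cancel]⟩

end LongExactSequence

section LeftInverse

variable {y : ℕ → R} {m : ℕ} {gr₀ : ℤ → AddSubgroup M} {D : M →+ M}

theorem sub_smul_koszulMap_mem {r : R} (h : ∀ e, ∀ v ∈ gr e, v - r • D v ∈ gr₀ e) {m : ℕ}
    {i e : ℤ} {c : KoszulCone M m} (hc : c ∈ koszulPiece gr m i e) :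
    c - r • koszulMap D m c ∈ koszulPiece gr₀ m i e := by
  suffices ∀ m (c : KoszulCone M m), c - r • koszulMap D m c =
      koszulMap (AddMonoidHom.id M - (DistribSMul.toAddMonoidHom M r).comp D) m c by
    rw [this]
    exact koszulMap_mem h hc
  intro m c
  induction m with
  | zero => rfl
  | succ m ih =>
    obtain ⟨a, b, rfl⟩ := c.exists_mk_eq
    rw [koszulMap_mk, koszulMap_mk, ← ih, ← ih, KoszulCone.smul_mk, KoszulCone.mk_sub_mk]

/- The cycle `a + b e_m` is the boundary of `c' + D a e_m`, where `c'` bounds the cycle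
`a - y_m D a` of the smaller Koszul complex. -/
theorem KoszulVanishes.succ_of_leftInverse (hle : ∀ e, gr₀ e ≤ gr e)
    (hm : ∀ v, D (y m • v) = v) (hlt : ∀ j < m, ∀ v, D (y j • v) = y j • D v)
    (hD : ∀ e, ∀ v ∈ gr e, D v ∈ gr (e - 1)) (hsub : ∀ e, ∀ v ∈ gr e, v - y m • D v ∈ gr₀ e)
    {i e : ℤ} (h : KoszulVanishes y m gr₀ i e) : KoszulVanishes y (m + 1) gr i e := by
  intro c hc hdc
  obtain ⟨a, b, rfl⟩ := c.exists_mk_eq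
  rw [koszulD_mk, KoszulCone.mk_eq_zero] at hdc
  have hda : koszulD M y m a = -(y m • b) := eq_neg_of_add_eq_zero_left hdc.1
  have hdDa : koszulD M y m (koszulMap D m a) = -b := by
    rw [← koszulMap_koszulD hlt, hda, map_neg, koszulMap_smul_of_leftInverse hm]
  obtain ⟨c', hc', hdc'⟩ := h (a - y m • koszulMap D m a)
    (sub_smul_koszulMap_mem hsub (mk_mem_koszulPiece_iff.1 hc).1)
    (by rw [map_sub, map_smul, hda, hdDa, smul_neg, sub_self])
  refine ⟨.mk c' (koszulMap D m a), mk_mem_koszulPiece_iff.2 ⟨?_, ?_⟩, ?_⟩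
  · exact koszulPiece_mono hle m _ _ hc'
  · rw [add_sub_cancel_right, ← koszulPiece_sub]
    exact koszulMap_mem hD (mk_mem_koszulPiece_iff.1 hc).1
  · rw [koszulD_mk, hdc', sub_add_cancel, hdDa, neg_neg]

end LeftInverse

section DegreeZero

/-- Inclusion of the part of homological degree zero into the Koszul complex. -/
def koszulIncl (M : Type*) [AddCommGroup M] : ∀ m, M → KoszulCone M m
  | 0 => id
  | m + 1 => fun v => .mk (koszulIncl M m v) 0

/-- Projection of the Koszul complex onto its part of homological degree zero. -/
def koszulProj (R : Type*) [CommRing R] (M : Type*) [AddCommGroup M] [Module R M] :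
    ∀ m, KoszulCone M m →ₗ[R] M
  | 0 => LinearMap.id
  | m + 1 => koszulProj R M m ∘ₗ LinearMap.fst R (KoszulCone M m) (KoszulCone M m)

theorem koszulProj_mk (m : ℕ) (a b : KoszulCone M m) :
    koszulProj R M (m + 1) (.mk a b) = koszulProj R M m a := rfl

theorem koszulProj_koszulIncl (m : ℕ) (v : M) : koszulProj R M m (koszulIncl M m v) = v := by
  induction m with
  | zero => rfl
  | succ m ih => rw [koszulIncl, koszulProj_mk, ih]

theorem koszulD_koszulIncl (y : ℕ → R) (m : ℕ) (v : M) : koszulD M y m (koszulIncl M m v) = 0 := by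
  induction m with
  | zero => rfl
  | succ m ih =>
    rw [koszulIncl, koszulD_mk, ih, smul_zero, map_zero, neg_zero, add_zero, KoszulCone.mk_zero]

theorem koszulIncl_mem (m : ℕ) {e : ℤ} {v : M} (hv : v ∈ gr e) :
    koszulIncl M m v ∈ koszulPiece gr m 0 e := by
  induction m with
  | zero => rwa [koszulPiece_zero_zero]
  | succ m ih => exact mk_mem_koszulPiece_iff.2 ⟨ih, zero_mem _⟩

theorem koszulProj_mem {m : ℕ} {e : ℤ} {c : KoszulCone M m} (hc : c ∈ koszulPiece gr m 0 e) :
    koszulProj R M m c ∈ gr e := by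
  induction m with
  | zero => rwa [koszulPiece_zero_zero] at hc
  | succ m ih =>
    obtain ⟨a, b, rfl⟩ := c.exists_mk_eq
    exact ih (mk_mem_koszulPiece_iff.1 hc).1

theorem koszulProj_koszulD_mem_span (y : ℕ → R) {m : ℕ} {e : ℤ} {c : KoszulCone M m}
    (hc : c ∈ koszulPiece gr m 1 e) :
    koszulProj R M m (koszulD M y m c) ∈ Submodule.span R (gr (e - 1) : Set M) := by
  induction m with
  | zero => exact zero_mem _
  | succ m ih =>
    obtain ⟨a, b, rfl⟩ := c.exists_mk_eq
    obtain ⟨ha, hb⟩ := mk_mem_koszulPiece_iff.1 hc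
    rw [koszulD_mk, koszulProj_mk, map_add, map_smul]
    exact add_mem (ih ha) (Submodule.smul_mem _ _ (Submodule.subset_span (koszulProj_mem hb)))

theorem KoszulVanishes.mem_span {y : ℕ → R} {m : ℕ} {e : ℤ} (h : KoszulVanishes y m gr 0 e)
    {v : M} (hv : v ∈ gr e) : v ∈ Submodule.span R (gr (e - 1) : Set M) := by
  obtain ⟨b, hb, hdb⟩ := h _ (koszulIncl_mem m hv) (koszulD_koszulIncl y m v)
  rw [← koszulProj_koszulIncl (R := R) m v, ← hdb]
  exact koszulProj_koszulD_mem_span y hb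

end DegreeZero

end KoszulCone

section FreeModules

variable {K : Type} [Field K] {n : ℕ}

/-- The sequence of variables `x_0, …, x_{n-1}`, continued by zeros so that it can be fed to the
Koszul complex. -/
noncomputable def varSeq (K : Type) [Field K] (n : ℕ) : ℕ → MvPoly K (Fin n) :=
  fun j => if h : j < n then X ⟨j, h⟩ else 0

theorem varSeq_eq_X {j : ℕ} (h : j < n) : varSeq K n j = X ⟨j, h⟩ := dif_pos h

theorem homogComp_iff {e : ℤ} {p : MvPoly K (Fin n)} :
    HomogComp K (Fin n) e p ↔ ∀ d ∈ p.support, (d.degree : ℤ) = e := by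
  rw [HomogComp]
  split_ifs with he
  · have hdeg (d : Fin n →₀ ℕ) : Finsupp.weight 1 d = e.toNat ↔ (d.degree : ℤ) = e := by
      have : Finsupp.weight 1 d = d.degree :=
        (DFunLike.congr_fun Finsupp.degree_eq_weight_one d).symm
      lia
    simp only [mem_homogeneousSubmodule, IsHomogeneous, IsWeightedHomogeneous, hdeg,
      mem_support_iff]
  · refine ⟨fun hp d hd => by simp [hp] at hd, fun hp => ?_⟩
    rw [← support_eq_empty, Finset.eq_empty_iff_forall_notMem]
    exact fun d hd => he (hp d hd ▸ Int.natCast_nonneg _)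

/-- The degree `e` piece of `⊕_j K[x_0, …, x_{m-1}](-dg j)`, inside `⊕_j R(-dg j)`. For `m = n` it
consists of the homogeneous vectors of degree `e`. -/
noncomputable def freePiece (K : Type) [Field K] {n r : ℕ} (dg : Fin r → ℤ) (m : ℕ) (e : ℤ) :
    AddSubgroup (Fin r → MvPoly K (Fin n)) :=
  AddSubgroup.pi Set.univ fun j => (restrictSupport K
    {d | (d.degree : ℤ) = e - dg j ∧ ∀ i : Fin n, m ≤ i → d i = 0}).toAddSubgroup

variable {r : ℕ} {dg : Fin r → ℤ} {m : ℕ} {e : ℤ} {v : Fin r → MvPoly K (Fin n)}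

theorem mem_freePiece_iff : v ∈ freePiece K dg m e ↔ ∀ j, ∀ d ∈ (v j).support,
    (d.degree : ℤ) = e - dg j ∧ ∀ i : Fin n, m ≤ i → d i = 0 :=
  ⟨fun h j _ hd => h j trivial hd, fun h j _ _ hd => h j _ hd⟩

theorem mem_freePiece_self_iff : v ∈ freePiece K dg n e ↔ IsHomogVec K (Fin n) dg e v := by
  simp only [mem_freePiece_iff, IsHomogVec, homogComp_iff]
  exact forall₃_congr fun j d _ => and_iff_left fun i hi => absurd i.2 hi.not_gt

/-- Componentwise division by the variable `x_i`, discarding remainders. -/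
noncomputable def divVar (K : Type) [Field K] {n : ℕ} (r : ℕ) (i : Fin n) :
    (Fin r → MvPoly K (Fin n)) →+ (Fin r → MvPoly K (Fin n)) :=
  AddMonoidHom.compLeft (AddMonoidHom.mk' (fun p => p.divMonomial (Finsupp.single i 1))
    fun p q => add_divMonomial p q _) (Fin r)

theorem divVar_apply (i : Fin n) (v : Fin r → MvPoly K (Fin n)) (j : Fin r) :
    divVar K r i v j = (v j).divMonomial (Finsupp.single i 1) := rfl

theorem divVar_X_smul (i : Fin n) (v : Fin r → MvPoly K (Fin n)) :
    divVar K r i ((X i : MvPoly K (Fin n)) • v) = v :=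
  funext fun j => X_mul_divMonomial i (v j)

theorem X_mul_divMonomial_of_ne {i j : Fin n} (h : j ≠ i) (p : MvPoly K (Fin n)) :
    (X j * p).divMonomial (Finsupp.single i 1) = X j * p.divMonomial (Finsupp.single i 1) := by
  ext d
  rw [coeff_divMonomial, coeff_X_mul', coeff_X_mul', coeff_divMonomial]
  have hmem : j ∈ (Finsupp.single i 1 + d).support ↔ j ∈ d.support := by
    simp [Finsupp.single_eq_of_ne h]
  refine if_ctx_congr hmem (fun hj => ?_) fun _ => rfl
  rw [add_tsub_assoc_of_le (Finsupp.single_le_iff.2 (Nat.one_le_iff_ne_zero.2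
    (Finsupp.mem_support_iff.1 hj)))]

theorem divVar_X_smul_of_ne {i j : Fin n} (h : j ≠ i) (v : Fin r → MvPoly K (Fin n)) :
    divVar K r i ((X j : MvPoly K (Fin n)) • v) = (X j : MvPoly K (Fin n)) • divVar K r i v :=
  funext fun k => X_mul_divMonomial_of_ne h (v k)

theorem divVar_mem (i : Fin n) (hv : v ∈ freePiece K dg m e) :
    divVar K r i v ∈ freePiece K dg m (e - 1) := by
  rw [mem_freePiece_iff] at hv ⊢
  intro j d hd
  rw [divVar_apply, mem_support_iff, coeff_divMonomial, ← mem_support_iff] at hd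
  obtain ⟨hdeg, hvar⟩ := hv j _ hd
  rw [map_add, Finsupp.degree_single] at hdeg
  exact ⟨by push_cast at hdeg; lia, fun k hk => (Nat.add_eq_zero_iff.1 (hvar k hk)).2⟩

theorem sub_X_smul_divVar_mem (hm : m < n) (hv : v ∈ freePiece K dg (m + 1) e) :
    v - (X ⟨m, hm⟩ : MvPoly K (Fin n)) • divVar K r ⟨m, hm⟩ v ∈ freePiece K dg m e := by
  have hmod : ∀ j, (v - (X ⟨m, hm⟩ : MvPoly K (Fin n)) • divVar K r ⟨m, hm⟩ v) j =
      (v j).modMonomial (Finsupp.single ⟨m, hm⟩ 1) := fun j =>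
    sub_eq_of_eq_add' (divMonomial_add_modMonomial_single (v j) ⟨m, hm⟩).symm
  rw [mem_freePiece_iff] at hv ⊢
  intro j d hd
  rw [hmod, mem_support_iff] at hd
  have hle : ¬ Finsupp.single ⟨m, hm⟩ 1 ≤ d := fun hle => hd (coeff_modMonomial_of_le _ hle)
  rw [coeff_modMonomial_of_not_le _ hle, ← mem_support_iff] at hd
  obtain ⟨hdeg, hvar⟩ := hv j d hd
  refine ⟨hdeg, fun k hk => ?_⟩
  obtain rfl | hlt := eq_or_lt_of_le hk
  · exact Nat.eq_zero_of_not_pos fun h => hle (Finsupp.single_le_iff.2 h)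
  · exact hvar k hlt

theorem freePiece_mono {m m' : ℕ} (h : m ≤ m') (e : ℤ) :
    freePiece K (n := n) dg m e ≤ freePiece K dg m' e := fun v hv => by
  rw [mem_freePiece_iff] at hv ⊢
  exact fun j d hd => ⟨(hv j d hd).1, fun i hi => (hv j d hd).2 i (h.trans hi)⟩

theorem eq_zero_of_mem_freePiece_zero (he : ∀ j, e ≠ dg j) (hv : v ∈ freePiece K dg 0 e) :
    v = 0 := by
  rw [mem_freePiece_iff] at hv
  funext j
  rw [Pi.zero_apply, ← support_eq_empty, Finset.eq_empty_iff_forall_notMem]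
  intro d hd
  obtain ⟨hdeg, hvar⟩ := hv j d hd
  obtain rfl : d = 0 := Finsupp.ext fun i => hvar i i.1.zero_le
  rw [map_zero, Nat.cast_zero] at hdeg
  exact he j (sub_eq_zero.1 hdeg.symm)

theorem koszulVanishes_freePiece (dg : Fin r → ℤ) {i e : ℤ} (h : i ≠ 0 ∨ ∀ j, e ≠ dg j) {m : ℕ}
    (hm : m ≤ n) : KoszulVanishes (varSeq K n) m (freePiece (n := n) K dg m) i e := by
  induction m with
  | zero =>
    refine fun c hc _ => ⟨0, zero_mem _, (map_zero _).trans (Eq.symm ?_)⟩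
    obtain rfl | hi := eq_or_ne i 0
    · rw [koszulPiece_zero_zero] at hc
      exact eq_zero_of_mem_freePiece_zero (h.resolve_left fun h => h rfl) hc
    · rwa [koszulPiece_zero_of_ne hi] at hc
  | succ m ih =>
    have hX : varSeq K n m = X ⟨m, hm⟩ := varSeq_eq_X hm
    refine (ih (Nat.le_of_succ_le hm)).succ_of_leftInverse (D := divVar K r ⟨m, hm⟩)
      (freePiece_mono m.le_succ) ?_ ?_ (fun _ _ => divVar_mem _) ?_
    · rw [hX]
      exact divVar_X_smul ⟨m, hm⟩
    · intro j hj v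
      rw [varSeq_eq_X (hj.trans hm)]
      exact divVar_X_smul_of_ne (fun h => hj.ne (congrArg Fin.val h)) v
    · rw [hX]
      exact fun _ _ => sub_X_smul_divVar_mem hm

end FreeModules

section GradedModules

variable {K : Type} [Field K] {n : ℕ}
variable {M : Type*} [AddCommGroup M] [Module (MvPoly K (Fin n)) M]
variable {M' : Type*} [AddCommGroup M']
variable {gr : ℤ → AddSubgroup M} {gr' : ℤ → AddSubgroup M'}

/-- The subgroups `gr e` are the homogeneous components of a `ℤ`-grading on the module `M` over the
standard graded polynomial ring. -/
structure IsGradedModule (K : Type) [Field K] (n : ℕ) {M : Type*} [AddCommGroup M]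
    [Module (MvPoly K (Fin n)) M] (gr : ℤ → AddSubgroup M) : Prop where
  iSup_eq_top : ⨆ e, gr e = ⊤
  indep : iSupIndep gr
  smul_mem : ∀ {a e : ℤ} {p : MvPoly K (Fin n)} {v : M}, HomogComp K (Fin n) a p → v ∈ gr e →
    p • v ∈ gr (a + e)

theorem homogComp_monomial (d : Fin n →₀ ℕ) (c : K) :
    HomogComp K (Fin n) d.degree (monomial d c) := by
  rw [homogComp_iff]
  intro a ha
  rw [Finset.mem_singleton.1 (support_monomial_subset ha)]

theorem homogComp_X (j : Fin n) : HomogComp K (Fin n) 1 (X j) := by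
  have h := homogComp_monomial (Finsupp.single j 1) (1 : K)
  rwa [Finsupp.degree_single, Nat.cast_one] at h

theorem IsGradedModule.isKoszulStable (h : IsGradedModule K n gr) :
    IsKoszulStable (varSeq K n) n gr := fun j hj e v hv => by
  rw [varSeq_eq_X hj, ← add_sub_cancel 1 e]
  exact h.smul_mem (homogComp_X _) hv

theorem map_iSup_ne_le {φ : M →+ M'} (hφ : ∀ e, ∀ v ∈ gr e, φ v ∈ gr' e) (e : ℤ) {v : M}
    (hv : v ∈ ⨆ (a) (_ : a ≠ e), gr a) : φ v ∈ ⨆ (a) (_ : a ≠ e), gr' a := by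
  suffices ⨆ (a) (_ : a ≠ e), gr a ≤ (⨆ (a) (_ : a ≠ e), gr' a).comap φ from this hv
  exact iSup₂_le fun a ha u hu => AddSubgroup.mem_iSup_of_mem a
    (AddSubgroup.mem_iSup_of_mem ha (hφ a u hu))

theorem IsGradedModule.exists_map_eq_of_mem_range (h : IsGradedModule K n gr)
    (h' : iSupIndep gr') {φ : M →+ M'} (hφ : ∀ e, ∀ v ∈ gr e, φ v ∈ gr' e) {e : ℤ} {u : M}
    (hu : φ u ∈ gr' e) : ∃ u' ∈ gr e, φ u' = φ u := by
  have hmem : u ∈ gr e ⊔ ⨆ (a) (_ : a ≠ e), gr a := by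
    rw [← iSup_split_single, h.iSup_eq_top]
    trivial
  obtain ⟨u₁, hu₁, u₂, hu₂, rfl⟩ := AddSubgroup.mem_sup.1 hmem
  rw [map_add] at hu ⊢
  have h₂ : φ u₂ ∈ gr' e := (add_mem_cancel_left (hφ e u₁ hu₁)).1 hu
  refine ⟨u₁, hu₁, ?_⟩
  rw [AddSubgroup.disjoint_def.1 (h' e) h₂ (map_iSup_ne_le hφ e hu₂), add_zero]

theorem mem_iSup_ker_of_mem_iSup_finset (h' : iSupIndep gr') {φ : M →+ M'}
    (hφ : ∀ e, ∀ v ∈ gr e, φ v ∈ gr' e) {s : Finset ℤ} {v : M} (hv : v ∈ ⨆ e ∈ s, gr e)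
    (h0 : φ v = 0) : v ∈ ⨆ e, gr e ⊓ φ.ker := by
  classical
  induction s using Finset.induction_on generalizing v with
  | empty =>
    rw [show v = 0 by simpa using hv]
    exact zero_mem _
  | insert e s he ih =>
    rw [Finset.iSup_insert] at hv
    obtain ⟨v₁, hv₁, v₂, hv₂, rfl⟩ := AddSubgroup.mem_sup.1 hv
    have hle : ⨆ a ∈ s, gr a ≤ ⨆ (a) (_ : a ≠ e), gr a :=
      biSup_mono fun a ha => ne_of_mem_of_not_mem ha he
    rw [map_add] at h0
    have h₁ : φ v₁ = 0 := AddSubgroup.disjoint_def.1 (h' e) (hφ e v₁ hv₁) <| by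
      rw [eq_neg_of_add_eq_zero_left h0]
      exact neg_mem (map_iSup_ne_le hφ e (hle hv₂))
    rw [h₁, zero_add] at h0
    exact add_mem (AddSubgroup.mem_iSup_of_mem e ⟨hv₁, h₁⟩) (ih hv₂ h0)

theorem IsGradedModule.mem_iSup_ker (h : IsGradedModule K n gr) (h' : iSupIndep gr')
    {φ : M →+ M'} (hφ : ∀ e, ∀ v ∈ gr e, φ v ∈ gr' e) {v : M} (h0 : φ v = 0) :
    v ∈ ⨆ e, gr e ⊓ φ.ker := by
  have hv : v ∈ ⨆ s : Finset ℤ, ⨆ e ∈ s, gr e := by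
    rw [← iSup_eq_iSup_finset, h.iSup_eq_top]
    trivial
  have hdir : Directed (· ≤ ·) fun s : Finset ℤ => ⨆ e ∈ s, gr e :=
    Monotone.directed_le fun s t hst => biSup_mono hst
  obtain ⟨s, hs⟩ := (AddSubgroup.mem_iSup_of_directed hdir).1 hv
  exact mem_iSup_ker_of_mem_iSup_finset h' hφ hs h0

variable [Module (MvPoly K (Fin n)) M']

/-- The grading induced on a submodule. -/
noncomputable def subPiece (gr : ℤ → AddSubgroup M) (N : Submodule (MvPoly K (Fin n)) M) (e : ℤ) :
    AddSubgroup N :=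
  (gr e).comap N.subtype.toAddMonoidHom

theorem iSupIndep_subPiece (h : iSupIndep gr) (N : Submodule (MvPoly K (Fin n)) M) :
    iSupIndep (subPiece gr N) := fun e => by
  refine AddSubgroup.disjoint_def.2 fun {v} hv hv' => Subtype.ext ?_
  exact AddSubgroup.disjoint_def.1 (h e) hv
    (map_iSup_ne_le (φ := N.subtype.toAddMonoidHom) (fun _ _ hu => hu) e hv')

theorem IsGradedModule.subPiece_ker (h : IsGradedModule K n gr) (h' : iSupIndep gr')
    {φ : M →ₗ[MvPoly K (Fin n)] M'} (hφ : ∀ e, ∀ v ∈ gr e, φ v ∈ gr' e) :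
    IsGradedModule K n (subPiece gr (LinearMap.ker φ)) where
  iSup_eq_top := by
    rw [eq_top_iff]
    rintro ⟨v, hv⟩ -
    have hle : ⨆ e, gr e ⊓ (φ : M →+ M').ker ≤
        (⨆ e, subPiece gr (LinearMap.ker φ) e).map (LinearMap.ker φ).subtype.toAddMonoidHom :=
      iSup_le fun e u hu => ⟨⟨u, hu.2⟩, AddSubgroup.mem_iSup_of_mem e hu.1, rfl⟩
    obtain ⟨u, hu, rfl⟩ := hle (h.mem_iSup_ker h' (φ := (φ : M →+ M')) hφ hv)
    exact hu
  indep := iSupIndep_subPiece h.indep _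
  smul_mem hp hv := h.smul_mem hp hv

theorem IsGradedModule.gradedShortExact_subtype (h : IsGradedModule K n gr) (h' : iSupIndep gr')
    {φ : M →ₗ[MvPoly K (Fin n)] M'} (hφ : ∀ e, ∀ v ∈ gr e, φ v ∈ gr' e)
    (surj : Function.Surjective φ) {N : Submodule (MvPoly K (Fin n)) M}
    (hN : LinearMap.ker φ = N) :
    GradedShortExact (varSeq K n) n (subPiece gr N) N.subtype gr φ gr' where
  stable := h.isKoszulStable
  injective := Subtype.val_injective
  exact := LinearMap.exact_iff.2 (hN.trans N.range_subtype.symm)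
  map_mem_iff _ _ := Iff.rfl
  map_mem := hφ
  exists_map_eq e v hv := by
    obtain ⟨u, rfl⟩ := surj v
    exact h.exists_map_eq_of_mem_range (φ := (φ : M →+ M')) h' hφ hv

end GradedModules

section GradedExamples

variable {K : Type} [Field K] {n : ℕ}

theorem HomogComp.mul {a c : ℤ} {p q : MvPoly K (Fin n)} (hp : HomogComp K (Fin n) a p)
    (hq : HomogComp K (Fin n) c q) : HomogComp K (Fin n) (a + c) (p * q) := by
  classical
  rw [homogComp_iff] at hp hq ⊢
  intro d hd
  obtain ⟨u, hu, w, hw, rfl⟩ := Finset.mem_add.1 (support_mul p q hd)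
  rw [map_add, Nat.cast_add, hp u hu, hq w hw]

theorem isGradedModule_freePiece {r : ℕ} (dg : Fin r → ℤ) :
    IsGradedModule K n (freePiece (n := n) K dg n) where
  iSup_eq_top := by
    classical
    refine eq_top_iff.2 fun v _ => ?_
    rw [← Finset.univ_sum_single v]
    refine sum_mem fun j _ => ?_
    rw [← support_sum_monomial_coeff (v j), ← AddMonoidHom.single_apply, map_sum]
    refine sum_mem fun d _ => AddSubgroup.mem_iSup_of_mem (d.degree + dg j : ℤ) ?_
    rw [mem_freePiece_self_iff]
    intro k
    obtain rfl | hk := eq_or_ne k j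
    · rw [AddMonoidHom.single_apply, Pi.single_eq_same, add_sub_cancel_right]
      exact homogComp_monomial d _
    · rw [AddMonoidHom.single_apply, Pi.single_eq_of_ne hk, homogComp_iff, support_zero]
      exact fun d hd => absurd hd (Finset.notMem_empty d)
  indep e := by
    have hle : ⨆ (a) (_ : a ≠ e), freePiece K dg n a ≤ AddSubgroup.pi Set.univ fun j =>
        (restrictSupport K {d : Fin n →₀ ℕ | (d.degree : ℤ) ≠ e - dg j}).toAddSubgroup :=
      iSup₂_le fun a ha v hv j _ d hd h => ha (sub_left_inj.1 ((hv j trivial hd).1.symm.trans h))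
    refine AddSubgroup.disjoint_def.2 fun {v} hv hv' => funext fun j => ?_
    rw [Pi.zero_apply, ← support_eq_empty, Finset.eq_empty_iff_forall_notMem]
    exact fun d hd => hle hv' j trivial hd (hv j trivial hd).1
  smul_mem {a e p v} hp hv := by
    rw [mem_freePiece_self_iff] at hv ⊢
    intro j
    rw [add_sub_assoc]
    exact hp.mul (hv j)

/-- The degree `e` piece of `R/I`. -/
noncomputable def quotPiece (I : Ideal (MvPoly K (Fin n))) (e : ℤ) :
    AddSubgroup (MvPoly K (Fin n) ⧸ I) :=
  (QuotComp K (Fin n) I e).toAddSubgroup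

variable {I J : Ideal (MvPoly K (Fin n))} {e : ℤ}

theorem mem_quotPiece_iff {v : MvPoly K (Fin n) ⧸ I} :
    v ∈ quotPiece I e ↔ ∃ p, HomogComp K (Fin n) e p ∧ Ideal.Quotient.mk I p = v := by
  rw [quotPiece, QuotComp]
  simp only [HomogComp]
  split_ifs
  · rfl
  · simp only [Submodule.mem_toAddSubgroup, Submodule.mem_bot, exists_eq_left, map_zero, eq_comm]

theorem isGradedModule_quotPiece (hI : IsMonomialIdeal K I) :
    IsGradedModule K n (quotPiece I) where
  iSup_eq_top := by
    refine eq_top_iff.2 fun v _ => ?_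
    obtain ⟨p, rfl⟩ := Ideal.Quotient.mk_surjective v
    rw [← support_sum_monomial_coeff p, map_sum]
    refine sum_mem fun d _ => AddSubgroup.mem_iSup_of_mem (d.degree : ℤ) ?_
    exact mem_quotPiece_iff.2 ⟨_, homogComp_monomial d _, rfl⟩
  indep e := by
    have hle : ⨆ (a) (_ : a ≠ e), quotPiece I a ≤
        (restrictSupport K {d : Fin n →₀ ℕ | (d.degree : ℤ) ≠ e}).toAddSubgroup.map
          (Ideal.Quotient.mk I).toAddMonoidHom := by
      refine iSup₂_le fun a ha v hv => ?_
      obtain ⟨p, hp, rfl⟩ := mem_quotPiece_iff.1 hv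
      exact ⟨p, fun d hd h => ha ((homogComp_iff.1 hp d hd).symm.trans h), rfl⟩
    refine AddSubgroup.disjoint_def.2 fun {v} hv hv' => ?_
    obtain ⟨p, hp, rfl⟩ := mem_quotPiece_iff.1 hv
    obtain ⟨q, hq, hqp⟩ := hle hv'
    rw [Ideal.Quotient.eq_zero_iff_mem]
    refine mem_of_forall_mono_mem fun d hd => ?_
    have hdq : coeff d q = 0 := notMem_support_iff.1 fun h => hq h (homogComp_iff.1 hp d hd)
    refine isMonomialIdeal_iff.1 hI _ (Ideal.Quotient.eq.1 hqp) d ?_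
    rwa [mem_support_iff, coeff_sub, hdq, zero_sub, neg_ne_zero, ← mem_support_iff]
  smul_mem {a e p v} hp hv := by
    obtain ⟨q, hq, rfl⟩ := mem_quotPiece_iff.1 hv
    exact mem_quotPiece_iff.2 ⟨p * q, hp.mul hq, rfl⟩

end GradedExamples

section RegularityBounds

variable {K : Type} [Field K] {n : ℕ} {r : ℤ}
variable {M : Type*} [AddCommGroup M] [Module (MvPoly K (Fin n)) M]
variable {M' : Type*} [AddCommGroup M'] [Module (MvPoly K (Fin n)) M']
variable {M'' : Type*} [AddCommGroup M''] [Module (MvPoly K (Fin n)) M'']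
variable {gr : ℤ → AddSubgroup M} {gr' : ℤ → AddSubgroup M'} {gr'' : ℤ → AddSubgroup M''}
variable {φ : M →ₗ[MvPoly K (Fin n)] M'} {ψ : M' →ₗ[MvPoly K (Fin n)] M''}

/-- The graded module `M` has Castelnuovo–Mumford regularity at most `r`: every `Tor_i(K, M)`
vanishes in degrees above `i + r`. -/
def RegBound (K : Type) [Field K] (n : ℕ) {M : Type*} [AddCommGroup M]
    [Module (MvPoly K (Fin n)) M] (gr : ℤ → AddSubgroup M) (r : ℤ) : Prop :=
  ∀ i e : ℤ, i + r < e → KoszulVanishes (varSeq K n) n gr i e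

theorem RegBound.of_le (h : RegBound K n gr r) {s : ℤ} (hrs : r ≤ s) : RegBound K n gr s :=
  fun i e he => h i e (by lia)

theorem regBound_sub_iff {s : ℤ} :
    RegBound K n (fun e => gr (e - s)) r ↔ RegBound K n gr (r - s) := by
  simp only [RegBound, koszulVanishes_sub_iff]
  refine ⟨fun h i e he => ?_, fun h i e he => h i (e - s) (by lia)⟩
  simpa only [add_sub_cancel_right] using h i (e + s) (by lia)

theorem RegBound.mid (S : GradedShortExact (varSeq K n) n gr φ gr' ψ gr'')
    (hA : RegBound K n gr r) (hC : RegBound K n gr'' r) : RegBound K n gr' r :=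
  fun i e he => (hA i e he).mid S (hC i e he)

theorem RegBound.right (S : GradedShortExact (varSeq K n) n gr φ gr' ψ gr'')
    (hB : RegBound K n gr' r) (hA : RegBound K n gr (r + 1)) : RegBound K n gr'' r :=
  fun i e he => (hB i e he).right S (hA (i - 1) e (by lia))

theorem RegBound.left (S : GradedShortExact (varSeq K n) n gr φ gr' ψ gr'')
    (hB : RegBound K n gr' r) (hC : RegBound K n gr'' (r - 1)) : RegBound K n gr r :=
  fun i e he => (hB i e he).left S (hC (i + 1) e (by lia))

theorem KoszulCone.subsingleton (M : Type*) [Subsingleton M] : ∀ m, Subsingleton (KoszulCone M m)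
  | 0 => inferInstanceAs (Subsingleton M)
  | m + 1 =>
    have := KoszulCone.subsingleton M m
    inferInstanceAs (Subsingleton (KoszulCone M m × KoszulCone M m))

theorem regBound_of_subsingleton [Subsingleton M] : RegBound K n gr r := fun _ _ _ c _ _ =>
  have := KoszulCone.subsingleton M n
  ⟨0, zero_mem _, Subsingleton.elim _ c⟩

theorem regBound_freePiece {m : ℕ} {dg : Fin m → ℤ} (h : ∀ j, dg j ≤ r) :
    RegBound K n (freePiece (n := n) K dg n) r := fun i e he =>
  koszulVanishes_freePiece dg (or_iff_not_imp_left.2 fun hi j => by have := h j; lia) le_rfl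

end RegularityBounds

section Resolutions

variable {K : Type} [Field K] {n : ℕ} {t : ℤ}
variable {M : Type*} [AddCommGroup M] [Module (MvPoly K (Fin n)) M] {gr : ℤ → AddSubgroup M}

theorem IsGradedModule.span_iUnion_eq_top (h : IsGradedModule K n gr)
    (h0 : ∀ e, t < e → KoszulVanishes (varSeq K n) n gr 0 e) :
    Submodule.span (MvPoly K (Fin n)) (⋃ (a : ℤ) (_ : a ≤ t), (gr a : Set M)) = ⊤ := by
  set N := Submodule.span (MvPoly K (Fin n)) (⋃ (a : ℤ) (_ : a ≤ t), (gr a : Set M))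
  have hlow : ∀ a ≤ t, (gr a : Set M) ⊆ N := fun a ha =>
    (Set.subset_iUnion₂ (s := fun a (_ : a ≤ t) => (gr a : Set M)) a ha).trans Submodule.subset_span
  have hhigh : ∀ e, t ≤ e → (gr e : Set M) ⊆ N := fun e he => by
    induction e, he using Int.leInduction with
    | base => exact hlow t le_rfl
    | succ e he ih =>
      intro v hv
      have hspan := (h0 (e + 1) (by lia)).mem_span hv
      rw [add_sub_cancel_right] at hspan
      exact Submodule.span_le.2 ih hspan
  refine eq_top_iff.2 fun v _ => ?_
  have hle : ⨆ e, gr e ≤ N.toAddSubgroup :=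
    iSup_le fun e => (le_total e t).elim (hlow e) (hhigh e)
  exact hle (h.iSup_eq_top ▸ AddSubgroup.mem_top v)

/-- A degree preserving surjection onto the graded module `M` from a graded free module of finite
rank with all generators in degrees at most `t`. -/
structure GradedCover (K : Type) [Field K] (n : ℕ) {M : Type*} [AddCommGroup M]
    [Module (MvPoly K (Fin n)) M] (gr : ℤ → AddSubgroup M) (t : ℤ) where
  rk : ℕ
  dg : Fin rk → ℤ
  map : (Fin rk → MvPoly K (Fin n)) →ₗ[MvPoly K (Fin n)] M
  surj : Function.Surjective map
  dg_le : ∀ j, dg j ≤ t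
  map_mem : ∀ e, ∀ v ∈ freePiece K dg n e, map v ∈ gr e

theorem IsGradedModule.nonempty_gradedCover [Module.Finite (MvPoly K (Fin n)) M]
    (h : IsGradedModule K n gr) (h0 : ∀ e, t < e → KoszulVanishes (varSeq K n) n gr 0 e) :
    Nonempty (GradedCover K n gr t) := by
  have hspan := h.span_iUnion_eq_top h0
  obtain ⟨s, hs, hs'⟩ := (Submodule.fg_span_iff_fg_span_finset_subset _).1
    (hspan ▸ Module.Finite.fg_top (R := MvPoly K (Fin n)) (M := M))
  have hdeg : ∀ u : s, ∃ a ≤ t, (u : M) ∈ gr a := fun u => by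
    simpa only [Set.mem_iUnion, exists_prop, SetLike.mem_coe] using hs u.2
  choose dg hdg hmem using hdeg
  let g : Fin s.card → s := s.equivFin.symm
  refine ⟨⟨s.card, dg ∘ g, Fintype.linearCombination _ fun j => (g j : M), ?_,
    fun j => hdg (g j), fun e v hv => ?_⟩⟩
  · rw [← LinearMap.range_eq_top, Fintype.range_linearCombination, ← hspan, hs']
    congr 1
    rw [show (fun j => (g j : M)) = Subtype.val ∘ g from rfl, s.equivFin.symm.surjective.range_comp]
    exact Subtype.range_coe
  · rw [Fintype.linearCombination_apply]
    refine sum_mem fun j _ => ?_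
    have := h.smul_mem ((mem_freePiece_self_iff.1 hv) j) (hmem (g j))
    rwa [Function.comp_apply, sub_add_cancel] at this

end Resolutions

section SyzygyModules

variable {K : Type} [Field K] {n : ℕ} {r t : ℤ}

theorem GradedCover.gradedShortExact {M : Type*} [AddCommGroup M] [Module (MvPoly K (Fin n)) M]
    {gr : ℤ → AddSubgroup M} (C : GradedCover K n gr t) (h : iSupIndep gr) :
    GradedShortExact (varSeq K n) n (subPiece (freePiece K C.dg n) (LinearMap.ker C.map))
      (LinearMap.ker C.map).subtype (freePiece K C.dg n) C.map gr :=
  (isGradedModule_freePiece C.dg).gradedShortExact_subtype h C.map_mem C.surj rfl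

/-- A finitely generated graded module of regularity at most `bound`. The bundle lets the successive
syzygy modules of a graded module be defined by recursion. -/
structure BoundedModule (K : Type) [Field K] (n : ℕ) where
  carrier : Type
  [addCommGroup : AddCommGroup carrier]
  [module : Module (MvPoly K (Fin n)) carrier]
  [finite : Module.Finite (MvPoly K (Fin n)) carrier]
  piece : ℤ → AddSubgroup carrier
  bound : ℤ
  isGradedModule : IsGradedModule K n piece
  regBound : RegBound K n piece bound

attribute [instance] BoundedModule.addCommGroup BoundedModule.module BoundedModule.finite

theorem BoundedModule.nonempty_gradedCover (A : BoundedModule K n) :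
    Nonempty (GradedCover K n A.piece A.bound) :=
  A.isGradedModule.nonempty_gradedCover fun e he => A.regBound 0 e (by rwa [zero_add])

/-- A chosen graded free cover of a graded module. -/
noncomputable def BoundedModule.cover (A : BoundedModule K n) : GradedCover K n A.piece A.bound :=
  Classical.choice A.nonempty_gradedCover

/-- The first syzygy module, the kernel of the chosen graded free cover. -/
noncomputable def BoundedModule.syzygy (A : BoundedModule K n) : BoundedModule K n where
  carrier := LinearMap.ker A.cover.map
  piece := subPiece (freePiece K A.cover.dg n) (LinearMap.ker A.cover.map)
  bound := A.bound + 1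
  isGradedModule :=
    (isGradedModule_freePiece A.cover.dg).subPiece_ker A.isGradedModule.indep A.cover.map_mem
  regBound := RegBound.left (A.cover.gradedShortExact A.isGradedModule.indep)
    (regBound_freePiece fun j => (A.cover.dg_le j).trans (lt_add_one _).le)
    (by rw [add_sub_cancel_right]; exact A.regBound)

/-- The iterated syzygy modules. -/
noncomputable def BoundedModule.syz (A : BoundedModule K n) : ℕ → BoundedModule K n
  | 0 => A
  | s + 1 => (A.syz s).syzygy

theorem BoundedModule.bound_syz (A : BoundedModule K n) (s : ℕ) :
    (A.syz s).bound = A.bound + s := by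
  induction s with
  | zero => exact (add_zero _).symm
  | succ s ih => rw [Nat.cast_succ, ← add_assoc, ← ih]; rfl

/-- The differentials of the graded free resolution spliced together from the covers of the
syzygy modules. -/
noncomputable def BoundedModule.dmap (A : BoundedModule K n) (s : ℕ) :
    (Fin (A.syz (s + 1)).cover.rk → MvPoly K (Fin n)) →ₗ[MvPoly K (Fin n)]
      (Fin (A.syz s).cover.rk → MvPoly K (Fin n)) :=
  (LinearMap.ker (A.syz s).cover.map).subtype ∘ₗ (A.syz (s + 1)).cover.map

theorem BoundedModule.exact_dmap_cover (A : BoundedModule K n) (s : ℕ) :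
    Function.Exact (A.dmap s) (A.syz s).cover.map :=
  (A.syz (s + 1)).cover.surj.comp_exact_iff_exact.2 (LinearMap.exact_subtype_ker_map _)

theorem BoundedModule.exact_dmap_dmap (A : BoundedModule K n) (s : ℕ) :
    Function.Exact (A.dmap (s + 1)) (A.dmap s) :=
  (LinearMap.ker (A.syz s).cover.map).injective_subtype.comp_exact_iff_exact.2
    (A.exact_dmap_cover (s + 1))

variable {I : Ideal (MvPoly K (Fin n))}

theorem resBound_of_regBound (hI : IsMonomialIdeal K I) (h : RegBound K n (quotPiece I) r) :
    ResBound K (Fin n) I r := by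
  let A : BoundedModule K n :=
    { carrier := MvPoly K (Fin n) ⧸ I
      piece := quotPiece I
      bound := r
      isGradedModule := isGradedModule_quotPiece hI
      regBound := h }
  refine ⟨{ rk := fun s => (A.syz s).cover.rk
            dg := fun s => (A.syz s).cover.dg
            dmap := A.dmap
            aug := A.cover.map
            aug_surj := A.cover.surj
            exact0 := A.exact_dmap_cover 0
            exactS := A.exact_dmap_dmap
            graded := fun s e v hv => mem_freePiece_self_iff.1
              ((A.syz (s + 1)).cover.map_mem e v (mem_freePiece_self_iff.2 hv))
            aug_graded := fun e v hv => A.cover.map_mem e v (mem_freePiece_self_iff.2 hv) },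
    fun s j => sub_le_iff_le_add.2 ?_⟩
  rw [← A.bound_syz s]
  exact (A.syz s).cover.dg_le j

/-- The syzygy modules of a graded free resolution, `syz s ⊆ F_s`. -/
noncomputable def GradedFreeRes.syz (F : GradedFreeRes K (Fin n) I) :
    ∀ s, Submodule (MvPoly K (Fin n)) (Fin (F.rk s) → MvPoly K (Fin n))
  | 0 => LinearMap.ker F.aug
  | s + 1 => LinearMap.ker (F.dmap s)

theorem GradedFreeRes.range_dmap (F : GradedFreeRes K (Fin n) I) :
    ∀ s, LinearMap.range (F.dmap s) = F.syz s
  | 0 => (LinearMap.exact_iff.1 F.exact0).symm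
  | s + 1 => (LinearMap.exact_iff.1 (F.exactS s)).symm

theorem GradedFreeRes.gradedShortExact_syz (F : GradedFreeRes K (Fin n) I) (s : ℕ) :
    ∃ φ, GradedShortExact (varSeq K n) n (subPiece (freePiece K (F.dg (s + 1)) n) (F.syz (s + 1)))
      (F.syz (s + 1)).subtype (freePiece K (F.dg (s + 1)) n) φ
      (subPiece (freePiece K (F.dg s) n) (F.syz s)) := by
  have hmem : ∀ v, F.dmap s v ∈ F.syz s := fun v => F.range_dmap s ▸ LinearMap.mem_range_self _ v
  refine ⟨(F.dmap s).codRestrict (F.syz s) hmem,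
    (isGradedModule_freePiece _).gradedShortExact_subtype
      (iSupIndep_subPiece (isGradedModule_freePiece _).indep _) (fun e v hv => ?_) ?_
      (LinearMap.ker_codRestrict _ _ _)⟩
  · exact mem_freePiece_self_iff.2 (F.graded s e v (mem_freePiece_self_iff.1 hv))
  · rintro ⟨v, hv⟩
    obtain ⟨u, rfl⟩ := F.range_dmap s ▸ hv
    exact ⟨u, rfl⟩

/- Dimension shifting: `Tor_i` of a syzygy module is `Tor_{i-1}` of the next one, up to `Tor` of a
free module. -/
theorem GradedFreeRes.koszulVanishes_syz (F : GradedFreeRes K (Fin n) I)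
    (hF : ∀ s j, F.dg s j - s ≤ r) (i : ℕ) : ∀ (s : ℕ) (e : ℤ), i + s + r < e →
      KoszulVanishes (varSeq K n) n (subPiece (freePiece K (F.dg s) n) (F.syz s)) (i - 1) e := by
  induction i with
  | zero => exact fun s e _ => koszulVanishes_of_neg _ _ _ (by lia) e
  | succ i ih =>
    intro s e he
    push_cast at he ⊢
    rw [add_sub_cancel_right]
    obtain ⟨φ, S⟩ := F.gradedShortExact_syz s
    exact (koszulVanishes_freePiece _ (Or.inr fun j => by have := hF (s + 1) j; lia) le_rfl).right S
      (ih (s + 1) e (by lia))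

theorem regBound_of_resBound (hI : IsMonomialIdeal K I) (h : ResBound K (Fin n) I r) :
    RegBound K n (quotPiece I) r := by
  obtain ⟨F, hF⟩ := h
  have S := (isGradedModule_freePiece (K := K) (n := n) (F.dg 0)).gradedShortExact_subtype
    (isGradedModule_quotPiece hI).indep
    (fun e v hv => F.aug_graded e v (mem_freePiece_self_iff.1 hv)) F.aug_surj (N := F.syz 0) rfl
  refine RegBound.right S (regBound_freePiece fun j => ?_) fun i e he => ?_
  · have := hF 0 j
    rwa [Nat.cast_zero, sub_zero] at this
  · obtain hi | hi := lt_or_ge i 0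
    · exact koszulVanishes_of_neg _ _ _ hi e
    · have := F.koszulVanishes_syz hF (i + 1).toNat 0 e (by lia)
      rwa [Int.toNat_of_nonneg (by lia), add_sub_cancel_right] at this

theorem resBound_iff_regBound (hI : IsMonomialIdeal K I) :
    ResBound K (Fin n) I r ↔ RegBound K n (quotPiece I) r :=
  ⟨regBound_of_resBound hI, resBound_of_regBound hI⟩

end SyzygyModules

section Regularity

variable {K : Type} [Field K] {n : ℕ} {I : Ideal (MvPoly K (Fin n))} {r e : ℤ}

theorem IsMonomialIdeal.divMonomial_mem_colon (hI : IsMonomialIdeal K I) {g : MvPoly K (Fin n)}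
    (hg : g ∈ I) (b : Fin n →₀ ℕ) : g.divMonomial b ∈ I.colon (Ideal.span {mono K b}) :=
  mem_of_forall_mono_mem fun d hd => mono_mem_colon_iff.2 <|
    isMonomialIdeal_iff.1 hI g hg _ <| by
      rwa [mem_support_iff, add_comm, ← coeff_divMonomial, ← mem_support_iff]

theorem HomogComp.divMonomial {q : MvPoly K (Fin n)} (hq : HomogComp K (Fin n) e q)
    (b : Fin n →₀ ℕ) : HomogComp K (Fin n) (e - b.degree) (q.divMonomial b) := by
  rw [homogComp_iff] at hq ⊢
  intro d hd
  rw [mem_support_iff, coeff_divMonomial, ← mem_support_iff] at hd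
  rw [← hq _ hd, map_add, Nat.cast_add, add_sub_cancel_left]

theorem IsMonomialIdeal.mk_mul_mono_mem_quotPiece_iff (hI : IsMonomialIdeal K I)
    (b : Fin n →₀ ℕ) (p : MvPoly K (Fin n)) :
    Ideal.Quotient.mk I (p * mono K b) ∈ quotPiece I e ↔
      Ideal.Quotient.mk (I.colon (Ideal.span {mono K b})) p ∈
        quotPiece (I.colon (Ideal.span {mono K b})) (e - b.degree) := by
  rw [mem_quotPiece_iff, mem_quotPiece_iff]
  constructor
  · rintro ⟨q, hq, hqp⟩
    refine ⟨q.divMonomial b, hq.divMonomial b, Ideal.Quotient.eq.2 ?_⟩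
    have hdiv : (p * mono K b).divMonomial b = p := divMonomial_mul_monomial b p
    nth_rw 1 [← sub_add_cancel q (p * mono K b)]
    rw [add_divMonomial, hdiv, add_sub_cancel_right]
    exact hI.divMonomial_mem_colon (Ideal.Quotient.eq.1 hqp) b
  · rintro ⟨q, hq, hqp⟩
    refine ⟨q * mono K b, ?_, ?_⟩
    · rw [← sub_add_cancel e (b.degree : ℤ)]
      exact hq.mul (homogComp_monomial b 1)
    · rw [← colonMul_mk, hqp, colonMul_mk]

theorem factor_mem_quotPiece {J : Ideal (MvPoly K (Fin n))} (h : I ≤ J) {v : MvPoly K (Fin n) ⧸ I}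
    (hv : v ∈ quotPiece I e) : Submodule.factor h v ∈ quotPiece J e := by
  obtain ⟨p, hp, rfl⟩ := mem_quotPiece_iff.1 hv
  exact mem_quotPiece_iff.2 ⟨p, hp, rfl⟩

theorem exists_factor_eq_of_mem_quotPiece {J : Ideal (MvPoly K (Fin n))} (h : I ≤ J)
    {v : MvPoly K (Fin n) ⧸ J} (hv : v ∈ quotPiece J e) :
    ∃ u ∈ quotPiece I e, Submodule.factor h u = v := by
  obtain ⟨p, hp, rfl⟩ := mem_quotPiece_iff.1 hv
  exact ⟨Ideal.Quotient.mk I p, mem_quotPiece_iff.2 ⟨p, hp, rfl⟩, rfl⟩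

theorem IsMonomialIdeal.gradedShortExact_colon (hI : IsMonomialIdeal K I) (b : Fin n →₀ ℕ) :
    GradedShortExact (varSeq K n) n
      (fun e => quotPiece (I.colon (Ideal.span {mono K b})) (e - b.degree)) (colonMul I (mono K b))
      (quotPiece I) (Submodule.factor le_sup_left) (quotPiece (I ⊔ Ideal.span {mono K b})) where
  stable := (isGradedModule_quotPiece hI).isKoszulStable
  injective := colonMul_injective I _
  exact := exact_colonMul_factor I _
  map_mem_iff e v := by
    obtain ⟨p, rfl⟩ := Ideal.Quotient.mk_surjective v
    exact hI.mk_mul_mono_mem_quotPiece_iff b p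
  map_mem _ _ hv := factor_mem_quotPiece le_sup_left hv
  exists_map_eq _ _ hv := exists_factor_eq_of_mem_quotPiece le_sup_left hv

theorem regBound_varFreePart (hI : IsMonomialIdeal K I) (h : RegBound K n (quotPiece I) r)
    (j : Fin n) : RegBound K n (quotPiece (varFreePart I j)) r := by
  have hJ := isMonomialIdeal_varFreePart I j
  have hy : varSeq K n j = mono K (Finsupp.single j 1) := varSeq_eq_X j.2
  refine fun i e he => (h i e he).of_ker_le_range_smul (j := j)
    (isGradedModule_quotPiece hJ).isKoszulStable
    (fun _ _ => factor_mem_quotPiece (varFreePart_le I j))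
    (fun _ _ => exists_factor_eq_of_mem_quotPiece (varFreePart_le I j)) j.2 ?_
    (fun e v hv => ?_) (fun v hv => ?_)
  · exact hy ▸ isSMulRegular_quotient_of_colon_eq (colon_varFreePart I j)
  · obtain ⟨p, rfl⟩ := Ideal.Quotient.mk_surjective v
    have hp := (hJ.mk_mul_mono_mem_quotPiece_iff (Finsupp.single j 1) p).1
      (by rwa [mul_comm, ← hy])
    rwa [colon_varFreePart, Finsupp.degree_single, Nat.cast_one] at hp
  · exact hy ▸ exists_smul_eq_of_factor_eq_zero (varFreePart_le I j) (hI.le_varFreePart_sup j) hv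

theorem RegBound.colon_single (hI : IsMonomialIdeal K I) (h : RegBound K n (quotPiece I) r)
    (j : Fin n) :
    RegBound K n (quotPiece (I.colon (Ideal.span {mono K (Finsupp.single j 1)}))) r := by
  set b : Fin n →₀ ℕ := Finsupp.single j 1
  have hb : (b.degree : ℤ) = 1 := by rw [Finsupp.degree_single, Nat.cast_one]
  have hJ := regBound_varFreePart hI h j
  have hsup : RegBound K n (quotPiece (I ⊔ Ideal.span {mono K b})) r := by
    rw [← sup_eq_sup_of_le_of_le_sup (varFreePart_le I j) (hI.le_varFreePart_sup j)]
    refine RegBound.right ((isMonomialIdeal_varFreePart I j).gradedShortExact_colon b) hJ ?_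
    rwa [regBound_sub_iff, hb, add_sub_cancel_right, colon_varFreePart]
  have hshift := RegBound.left (r := r + 1) (hI.gradedShortExact_colon b)
    (h.of_le (lt_add_one r).le) (by rwa [add_sub_cancel_right])
  rwa [regBound_sub_iff, hb, add_sub_cancel_right] at hshift

theorem RegBound.colon (hI : IsMonomialIdeal K I) (h : RegBound K n (quotPiece I) r)
    (b : Fin n →₀ ℕ) : RegBound K n (quotPiece (I.colon (Ideal.span {mono K b}))) r :=
  hI.colon_induction (P := fun J => RegBound K n (quotPiece J) r)
    (fun _ hJ h j => h.colon_single hJ j) h b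

theorem RegBound.sup (hI : IsMonomialIdeal K I) (h : RegBound K n (quotPiece I) r)
    (b : Fin n →₀ ℕ) :
    RegBound K n (quotPiece (I ⊔ Ideal.span {mono K b})) (r + (b.degree - 1)) := by
  obtain rfl | hb := eq_or_ne b 0
  · have : Subsingleton (MvPoly K (Fin n) ⧸ I ⊔ Ideal.span {mono K (0 : Fin n →₀ ℕ)}) := by
      rw [Ideal.Quotient.subsingleton_iff, mono_zero, Ideal.span_singleton_one, sup_top_eq]
    exact regBound_of_subsingleton
  · have hdeg : 0 < b.degree := Nat.pos_of_ne_zero (b.degree_eq_zero_iff.not.2 hb)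
    refine RegBound.right (hI.gradedShortExact_colon b) (h.of_le (by lia)) ?_
    rw [regBound_sub_iff]
    exact (h.colon hI b).of_le (by lia)

theorem isMonomialIdeal_bot : IsMonomialIdeal K (⊥ : Ideal (MvPoly K (Fin n))) :=
  ⟨∅, by rw [Set.image_empty, Ideal.span_empty]⟩

theorem regBound_quotPiece_bot :
    RegBound K n (quotPiece (⊥ : Ideal (MvPoly K (Fin n)))) 0 := by
  let φ : (Fin 1 → MvPoly K (Fin n)) →ₗ[MvPoly K (Fin n)]
    (MvPoly K (Fin n) ⧸ (⊥ : Ideal (MvPoly K (Fin n)))) :=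
    (Submodule.mkQ ⊥).comp (LinearMap.proj 0)
  have hφ : ∀ e, ∀ v ∈ freePiece K (0 : Fin 1 → ℤ) n e, φ v ∈ quotPiece ⊥ e := fun e v hv =>
    mem_quotPiece_iff.2 ⟨v 0, by simpa using mem_freePiece_self_iff.1 hv 0, rfl⟩
  have hker : LinearMap.ker φ = ⊥ := by
    refine LinearMap.ker_eq_bot'.2 fun v hv => funext fun i => ?_
    rw [Subsingleton.elim i 0]
    exact Ideal.Quotient.eq_zero_iff_mem.1 hv
  have hsurj : Function.Surjective φ := (Submodule.mkQ_surjective ⊥).comp fun p => ⟨fun _ => p, rfl⟩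
  exact RegBound.right ((isGradedModule_freePiece 0).gradedShortExact_subtype
    (isGradedModule_quotPiece isMonomialIdeal_bot).indep hφ hsurj hker)
    (regBound_freePiece fun _ => le_rfl) regBound_of_subsingleton

theorem IsMonomialIdeal.exists_finset (hI : IsMonomialIdeal K I) :
    ∃ S : Finset (Fin n →₀ ℕ), I = Ideal.span (mono K '' S) := by
  classical
  obtain ⟨S, rfl⟩ := hI
  obtain ⟨T, hT, hTs⟩ := (Submodule.fg_span_iff_fg_span_finset_subset _).1
    (IsNoetherian.noetherian (Ideal.span (mono K '' S)))
  obtain ⟨S', -, rfl⟩ := Finset.subset_set_image_iff.1 hT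
  exact ⟨S', by rw [← Finset.coe_image]; exact hTs⟩

theorem IsMonomialIdeal.exists_regBound (hI : IsMonomialIdeal K I) :
    ∃ r, RegBound K n (quotPiece I) r := by
  classical
  obtain ⟨S, rfl⟩ := hI.exists_finset
  clear hI
  induction S using Finset.induction_on with
  | empty =>
    rw [Finset.coe_empty, Set.image_empty, Ideal.span_empty]
    exact ⟨0, regBound_quotPiece_bot⟩
  | insert b S _ ih =>
    obtain ⟨r, hr⟩ := ih
    rw [Finset.coe_insert, Set.image_insert_eq, Ideal.span_insert, sup_comm]
    have hS : IsMonomialIdeal K (Ideal.span (mono K '' (S : Set (Fin n →₀ ℕ)))) := ⟨_, rfl⟩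
    exact ⟨_, hr.sup hS b⟩

theorem IsMonomialIdeal.CMreg_le_iff (hI : IsMonomialIdeal K I) :
    CMreg K (Fin n) I ≤ r ↔ RegBound K n (quotPiece I) r := by
  rw [CMreg]
  split_ifs with h
  · rw [WithBot.coe_le_coe, ← resBound_iff_regBound hI]
    refine ⟨fun hr => ?_, h.choose_spec.2 r⟩
    exact (resBound_iff_regBound hI).2 (((resBound_iff_regBound hI).1 h.choose_spec.1).of_le hr)
  · simp only [resBound_iff_regBound hI] at h
    refine iff_of_true bot_le (by_contra fun hr => h ?_)
    exact Int.exists_least_of_bdd ⟨r, fun s hs => le_of_not_ge fun hsr => hr (hs.of_le hsr)⟩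
      hI.exists_regBound

theorem withBot_le_of_forall_int {a c : WithBot ℤ} (h : ∀ r : ℤ, a ≤ r → c ≤ r) : c ≤ a := by
  induction a with
  | bot =>
    induction c with
    | bot => exact le_rfl
    | coe c => exact absurd (WithBot.coe_le_coe.1 (h (c - 1) bot_le)) (by lia)
  | coe a => exact h a le_rfl

theorem withBot_lt_coe_iff {c : WithBot ℤ} : c < r ↔ c ≤ (r - 1 : ℤ) := by
  induction c with
  | bot => exact iff_of_true (WithBot.bot_lt_coe r) bot_le
  | coe c => rw [WithBot.coe_lt_coe, WithBot.coe_le_coe, Int.le_sub_one_iff]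

theorem CMreg_colon_le (hI : IsMonomialIdeal K I) (b : Fin n →₀ ℕ) :
    CMreg K (Fin n) (I.colon (Ideal.span {mono K b})) ≤ CMreg K (Fin n) I :=
  withBot_le_of_forall_int fun _ hr =>
    (hI.colon b).CMreg_le_iff.2 ((hI.CMreg_le_iff.1 hr).colon hI b)

theorem CMreg_sup_le (hI : IsMonomialIdeal K I) (b : Fin n →₀ ℕ) :
    CMreg K (Fin n) (I ⊔ Ideal.span {mono K b}) ≤
      CMreg K (Fin n) I + (b.degree - 1 : ℤ) := by
  have hsup := hI.sup (isMonomialIdeal_span_mono b)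
  cases hr : CMreg K (Fin n) I with
  | bot =>
    have hall : ∀ s : ℤ, RegBound K n (quotPiece I) s := fun s =>
      hI.CMreg_le_iff.1 (hr.trans_le bot_le)
    refine withBot_le_of_forall_int fun s _ => hsup.CMreg_le_iff.2 ?_
    simpa only [sub_add_cancel] using (hall (s - (b.degree - 1))).sup hI b
  | coe r => exact hsup.CMreg_le_iff.2 ((hI.CMreg_le_iff.1 hr.le).sup hI b)

theorem CMreg_eq_colon_add_one_or_eq_sup (hI : IsMonomialIdeal K I) {b : Fin n →₀ ℕ}
    (hb : b.degree = 1) :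
    CMreg K (Fin n) I = CMreg K (Fin n) (I.colon (Ideal.span {mono K b})) + 1 ∨
      CMreg K (Fin n) I = CMreg K (Fin n) (I ⊔ Ideal.span {mono K b}) := by
  refine or_iff_not_imp_right.2 fun hne => ?_
  have hle : CMreg K (Fin n) (I ⊔ Ideal.span {mono K b}) ≤ CMreg K (Fin n) I := by
    simpa [hb] using CMreg_sup_le hI b
  have hlt := hle.lt_of_ne' hne
  have S := hI.gradedShortExact_colon b
  cases hr : CMreg K (Fin n) I with
  | bot => exact absurd (hr ▸ hlt) not_lt_bot
  | coe r =>
    have hsup : RegBound K n (quotPiece (I ⊔ Ideal.span {mono K b})) (r - 1) :=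
      (hI.sup (isMonomialIdeal_span_mono b)).CMreg_le_iff.1 (withBot_lt_coe_iff.1 (hr ▸ hlt))
    have hcolon : RegBound K n (quotPiece (I.colon (Ideal.span {mono K b}))) (r - 1) := by
      simpa only [regBound_sub_iff, hb, Nat.cast_one] using
        RegBound.left S (hI.CMreg_le_iff.1 hr.le) hsup
    have hnot : ¬ RegBound K n (quotPiece (I.colon (Ideal.span {mono K b}))) (r - 1 - 1) := by
      intro h
      have hI' : RegBound K n (quotPiece I) (r - 1) :=
        RegBound.mid S (by rwa [regBound_sub_iff, hb, Nat.cast_one]) hsup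
      have hlt := withBot_lt_coe_iff.2 (hI.CMreg_le_iff.2 hI')
      exact hlt.ne hr
    rw [← (hI.colon b).CMreg_le_iff] at hcolon hnot
    rw [hcolon.antisymm (not_lt.1 (withBot_lt_coe_iff.not.2 hnot)), ← WithBot.coe_one,
      ← WithBot.coe_add, sub_add_cancel]

end Regularity

/-- depth and regularity inequalities for an arbitrary monomial ideal
`I`, a monomial `f` of degree `k` and distinct variables `x_{i_1}, …, x_{i_k}`. -/
theorem stmt4 (K : Type) [Field K] (n : ℕ) (I : Ideal (MvPoly K (Fin n)))
    (hI : IsMonomialIdeal K I) (b : Fin n →₀ ℕ) (f : MvPoly K (Fin n)) (hf : f = mono K b)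
    (k : ℕ) (hk : k = b.sum fun _ m => m)
    (T : Finset (Fin n)) (hT : T.card = k) :
    (depthQ K (Fin n) (I + Ideal.span {f}) ≥ depthQ K (Fin n) I - 1) ∧
    (depthQ K (Fin n) I ≤ depthQ K (Fin n) (I.colon (Ideal.span {f}))) ∧
    (depthQ K (Fin n)
        (I + Ideal.span ((fun i => (MvPolynomial.X i : MvPoly K (Fin n))) '' ↑T)) ≥
      depthQ K (Fin n) I - (k : ℕ∞)) ∧
    (CMreg K (Fin n) I ≥ CMreg K (Fin n) (I.colon (Ideal.span {f}))) ∧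
    (CMreg K (Fin n) (I + Ideal.span {f}) ≤
      CMreg K (Fin n) I + (((k : ℤ) - 1 : ℤ) : WithBot ℤ)) ∧
    (depthQ K (Fin n) I = depthQ K (Fin n) (I.colon (Ideal.span {f})) ∨
      depthQ K (Fin n) I = depthQ K (Fin n) (I + Ideal.span {f})) ∧
    (k = 1 →
      (CMreg K (Fin n) I = CMreg K (Fin n) (I.colon (Ideal.span {f})) + 1 ∨
        CMreg K (Fin n) I = CMreg K (Fin n) (I + Ideal.span {f}))) := by
  subst hf
  have hdeg : b.degree = k := hk.symm
  refine ⟨depthQ_sub_one_le_sup hI b, depthQ_le_colon hI b, ?_, CMreg_colon_le hI b, ?_,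
    depthQ_eq_colon_or_eq_sup hI b, fun h1 => CMreg_eq_colon_add_one_or_eq_sup hI (hdeg.trans h1)⟩
  · rw [← hT]
    exact depthQ_sub_card_le_sup hI T
  · rw [← hdeg]
    exact CMreg_sup_le hI b
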